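/- arXiv:1501.01498 — 5 statements merged into one kernel-verified Lean document; each statement's English description precedes it below -/
import Mathlib

section
/- Let n ≥ 1 and let λ̄₁, …, λ̄ₙ be real numbers. Let k̲, k̄ ∈ {1, …, n} with k̲ < k̄ be such that for every j ∈ {k̲, …, k̄ − 1} the stability condition (1/(j − k̲ + 1)) Σ_{k=k̲}^{j} λ̄ₖ ≥ (1/(k̄ − j)) Σ_{k=j+1}^{k̄} λ̄ₖ holds. Then for all k̲′, k̄′ with k̲ ≤ k̲′ < k̄′ ≤ k̄ one has (1/(k̲′ − k̲ + 1)) Σ_{k=k̲}^{k̲′} λ̄ₖ ≥ (1/(k̄ − k̄′ + 1)) Σ_{k=k̄′}^{k̄} λ̄ₖ. -/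
/-!
The average over a union of two disjoint sets is a weighted mean of the averages over the parts,
hence lies between them. The stability condition at a splitting point therefore places the average
over the whole cluster below that of the left part and above that of the right part. Comparing both
pieces with the whole cluster reduces the claim about two splitting points to one condition each.
-/

open Finset
open scoped BigOperators

section Average

variable {ι M : Type*} [AddCommMonoid M] [Module ℚ≥0 M] {f : ι → M}

theorem card_add_card_nsmul_expect_union [DecidableEq ι] {s t : Finset ι} (hst : Disjoint s t) :
    (#s + #t) • 𝔼 i ∈ s ∪ t, f i = #s • 𝔼 i ∈ s, f i + #t • 𝔼 i ∈ t, f i := by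
  rw [← card_union_of_disjoint hst]
  simp only [card_smul_expect, sum_union hst]

variable [LinearOrder M] [IsOrderedCancelAddMonoid M]

theorem expect_union_mem_Icc [DecidableEq ι] {s t : Finset ι} (hst : Disjoint s t)
    (h : 𝔼 i ∈ t, f i ≤ 𝔼 i ∈ s, f i) :
    𝔼 i ∈ s ∪ t, f i ∈ Set.Icc (𝔼 i ∈ t, f i) (𝔼 i ∈ s, f i) := by
  obtain hempty | hne := (s ∪ t).eq_empty_or_nonempty
  · obtain ⟨rfl, rfl⟩ := union_eq_empty.mp hempty
    simp
  have hcard : #s + #t ≠ 0 := by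
    rw [← card_union_of_disjoint hst]
    exact hne.card_ne_zero
  rw [Set.mem_Icc, ← nsmul_le_nsmul_iff_right hcard,
    ← nsmul_le_nsmul_iff_right (b := 𝔼 i ∈ s, f i) hcard,
    card_add_card_nsmul_expect_union hst, add_nsmul, add_nsmul]
  constructor <;> gcongr

theorem expect_Icc_mem_Icc [LinearOrder ι] [LocallyFiniteOrder ι] {a j b : ι}
    (haj : a ≤ j) (hjb : j ≤ b) (h : 𝔼 i ∈ Ioc j b, f i ≤ 𝔼 i ∈ Icc a j, f i) :
    𝔼 i ∈ Icc a b, f i ∈ Set.Icc (𝔼 i ∈ Ioc j b, f i) (𝔼 i ∈ Icc a j, f i) := by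
  have hunion : Icc a j ∪ Ioc j b = Icc a b := by
    rw [← coe_inj]
    push_cast
    exact Set.Icc_union_Ioc_eq_Icc haj hjb
  have hdisj : Disjoint (Icc a j) (Ioc j b) :=
    disjoint_left.mpr fun _ hi hi' ↦ (mem_Icc.mp hi).2.not_gt (mem_Ioc.mp hi').1
  rw [← hunion]
  exact expect_union_mem_Icc hdisj h

end Average

section NatInterval

variable {K : Type*} [Field K]

theorem expect_Ioc_nat [CharZero K] (f : ℕ → K) {a b : ℕ} (hab : a ≤ b) :
    𝔼 k ∈ Ioc a b, f k = 1 / ((b : K) - a) * ∑ k ∈ Icc (a + 1) b, f k := by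
  rw [expect_eq_sum_div_card, Nat.card_Ioc, Nat.cast_sub hab, one_div_mul_eq_div,
    Icc_add_one_left_eq_Ioc]

theorem expect_Icc_nat [CharZero K] (f : ℕ → K) {a b : ℕ} (hab : a ≤ b) :
    𝔼 k ∈ Icc a b, f k = 1 / ((b : K) - a + 1) * ∑ k ∈ Icc a b, f k := by
  rw [expect_eq_sum_div_card, Nat.card_Icc, Nat.cast_sub (by lia), one_div_mul_eq_div,
    Nat.cast_add_one, sub_add_eq_add_sub]

variable [LinearOrder K] [IsStrictOrderedRing K]

theorem stability_extension_general {lam : ℕ → K} {ku kb : ℕ}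
    (hstab : ∀ j : ℕ, ku ≤ j → j < kb →
      (1 / ((j : K) - (ku : K) + 1)) * ∑ k ∈ Icc ku j, lam k ≥
        (1 / ((kb : K) - (j : K))) * ∑ k ∈ Icc (j + 1) kb, lam k)
    {ku' kb' : ℕ} (hku : ku ≤ ku') (hku' : ku' ≤ kb) (hkb : ku ≤ kb') (hkb' : kb' ≤ kb) :
    (1 / ((ku' : K) - (ku : K) + 1)) * ∑ k ∈ Icc ku ku', lam k ≥
      (1 / ((kb : K) - (kb' : K) + 1)) * ∑ k ∈ Icc kb' kb, lam k := by
  have hbetween (j : ℕ) (hj : ku ≤ j) (hjb : j < kb) :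
      𝔼 k ∈ Icc ku kb, lam k ∈ Set.Icc (𝔼 k ∈ Ioc j kb, lam k) (𝔼 k ∈ Icc ku j, lam k) := by
    refine expect_Icc_mem_Icc hj hjb.le ?_
    rw [expect_Ioc_nat lam hjb.le, expect_Icc_nat lam hj]
    exact hstab j hj hjb
  have hleft : 𝔼 k ∈ Icc ku kb, lam k ≤ 𝔼 k ∈ Icc ku ku', lam k := by
    obtain rfl | hlt := hku'.eq_or_lt
    · exact le_rfl
    · exact (hbetween ku' hku hlt).2
  have hright : 𝔼 k ∈ Icc kb' kb, lam k ≤ 𝔼 k ∈ Icc ku kb, lam k := by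
    obtain rfl | hlt := hkb.eq_or_lt
    · exact le_rfl
    · obtain ⟨j, rfl⟩ := Nat.exists_eq_add_one_of_ne_zero hlt.ne_bot
      rw [Icc_add_one_left_eq_Ioc]
      exact (hbetween j (Nat.le_of_lt_succ hlt) hkb').1
  rw [← expect_Icc_nat lam hku, ← expect_Icc_nat lam hkb']
  exact hright.trans hleft

end NatInterval

/-- **Extension of the stability condition** (Lemma, Sticky Particle Dynamics):
if the stability condition holds for all intermediate splitting points of a cluster
`{k̲, …, k̄}`, then the average initial velocity of any leftmost piece dominates the
average initial velocity of any rightmost piece. -/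
theorem stability_extension (n : ℕ) (hn : 1 ≤ n) (lam : ℕ → ℝ)
    (ku kb : ℕ) (hku : 1 ≤ ku) (hkb : kb ≤ n) (hlt : ku < kb)
    (hstab : ∀ j : ℕ, ku ≤ j → j < kb →
      (1 / ((j : ℝ) - (ku : ℝ) + 1)) * ∑ k ∈ Finset.Icc ku j, lam k ≥
        (1 / ((kb : ℝ) - (j : ℝ))) * ∑ k ∈ Finset.Icc (j + 1) kb, lam k) :
    ∀ ku' kb' : ℕ, ku ≤ ku' → ku' < kb' → kb' ≤ kb →
      (1 / ((ku' : ℝ) - (ku : ℝ) + 1)) * ∑ k ∈ Finset.Icc ku ku', lam k ≥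
        (1 / ((kb : ℝ) - (kb' : ℝ) + 1)) * ∑ k ∈ Finset.Icc kb' kb, lam k := by
  intro ku' kb' hku' hlt' hkb'
  exact stability_extension_general hstab hku' (by lia) (by lia) hkb'
end

section
/- Let ℓ : [0,1] × ℝ → ℝ be a bounded measurable function and let F be the CDF of a Borel probability measure m on ℝ. Then ∫_ℝ ( ∫₀¹ ℓ((1 − θ)F(x⁻) + θF(x), x) dθ ) m(dx) = ∫₀¹ ℓ(v, F⁻¹(v)) dv. -/
open MeasureTheory Set Filter

/-!
Randomize the CDF at its jumps: `T (x, θ) = (1 - θ) * F(x⁻) + θ * F x`. Up to null sets, `T` is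
monotone for the lexicographic order on `ℝ × (0, 1)`, so `{T ≤ T (x, θ)}` is the initial segment of
`(x, θ)`, of mass `m (-∞, x) + θ * m {x} = F(x⁻) + θ * (F x - F(x⁻)) = T (x, θ)` under `m ⊗ dθ`.
Since `T` takes every value in `(0, 1)`, it is uniformly distributed. As `F⁻¹ (T (x, θ)) = x` almost
everywhere, the left side of the formula is the integral of `(v ↦ ℓ (v, F⁻¹ v)) ∘ T`.
-/

section

open ProbabilityTheory Function

/-- The pseudo-inverse `F⁻¹(v) = inf {x | v ≤ F x}`. It is meaningful only if this set is nonempty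
and bounded below, e.g. for a CDF and `0 < v < 1`; otherwise the infimum is `0`. -/
noncomputable def quantile (F : ℝ → ℝ) (v : ℝ) : ℝ :=
  sInf {x | v ≤ F x}

/-- The distributional transform of `F`, which makes a CDF uniformly distributed by spreading the
mass of each jump over the corresponding interval: a point `(x, θ)` with `θ ∈ [0, 1]` is sent to
the point dividing `[F(x⁻), F x]` in the ratio `θ : 1 - θ`. -/
noncomputable def distributionalTransform (F : ℝ → ℝ) (p : ℝ × ℝ) : ℝ :=
  (1 - p.2) * leftLim F p.1 + p.2 * F p.1

variable {F : ℝ → ℝ} {v x y θ η : ℝ}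

lemma quantile_eq_of_forall_lt (hx : v ≤ F x) (hlt : ∀ y < x, F y < v) : quantile F v = x :=
  IsLeast.csInf_eq ⟨hx, fun y hy ↦ not_lt.1 fun hyx ↦ (hlt y hyx).not_ge hy⟩

lemma quantile_le_iff {F : StieltjesFunction ℝ} (hne : {x | v ≤ F x}.Nonempty)
    (hbdd : BddBelow {x | v ≤ F x}) : quantile F v ≤ x ↔ v ≤ F x := by
  refine ⟨fun h ↦ ?_, fun h ↦ csInf_le hbdd h⟩
  have hright : Tendsto F (nhdsWithin x (Ioi x)) (nhds (F x)) :=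
    (F.right_continuous x).mono Ioi_subset_Ici_self
  refine ge_of_tendsto hright ?_
  filter_upwards [self_mem_nhdsWithin] with y hy
  obtain ⟨z, hz, hzy⟩ := exists_lt_of_csInf_lt hne (h.trans_lt hy)
  exact hz.trans (F.mono hzy.le)

lemma distributionalTransform_eq_leftLim_add (F : ℝ → ℝ) (x θ : ℝ) :
    distributionalTransform F (x, θ) = leftLim F x + θ * (F x - leftLim F x) := by
  simp only [distributionalTransform]
  ring

lemma leftLim_le_distributionalTransform (hF : Monotone F) (hθ : 0 ≤ θ) :
    leftLim F x ≤ distributionalTransform F (x, θ) := by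
  rw [distributionalTransform_eq_leftLim_add]
  exact le_add_of_nonneg_right (mul_nonneg hθ (sub_nonneg.2 (hF.leftLim_le le_rfl)))

lemma distributionalTransform_le (hF : Monotone F) (hθ : θ ≤ 1) :
    distributionalTransform F (x, θ) ≤ F x := by
  have hjump := mul_nonneg (sub_nonneg.2 hθ)
    (sub_nonneg.2 (hF.leftLim_le le_rfl : leftLim F x ≤ F x))
  simp only [distributionalTransform]
  linarith

lemma lt_distributionalTransform (hF : Monotone F) (hθ : θ ∈ Ioo 0 1) (hyx : y < x)
    (hlt : F y < F x) : F y < distributionalTransform F (x, θ) := by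
  have hleft := mul_nonneg (sub_nonneg.2 hθ.2.le) (sub_nonneg.2 (hF.le_leftLim hyx))
  have hright := mul_pos hθ.1 (sub_pos.2 hlt)
  simp only [distributionalTransform]
  linarith

lemma distributionalTransform_le_of_lt (hF : Monotone F) (hθ : θ ≤ 1) (hη : 0 ≤ η)
    (hxy : x < y) : distributionalTransform F (x, θ) ≤ distributionalTransform F (y, η) :=
  calc distributionalTransform F (x, θ) ≤ F x := distributionalTransform_le hF hθ
    _ ≤ leftLim F y := hF.le_leftLim hxy
    _ ≤ distributionalTransform F (y, η) := leftLim_le_distributionalTransform hF hη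

lemma distributionalTransform_le_iff (hx : leftLim F x < F x) :
    distributionalTransform F (x, θ) ≤ distributionalTransform F (x, η) ↔ θ ≤ η := by
  rw [distributionalTransform_eq_leftLim_add, distributionalTransform_eq_leftLim_add,
    add_le_add_iff_left, mul_le_mul_iff_left₀ (sub_pos.2 hx)]

lemma quantile_distributionalTransform (hF : Monotone F) (hθ : θ ∈ Ioo 0 1)
    (hx : ∀ y < x, F y < F x) : quantile F (distributionalTransform F (x, θ)) = x :=
  quantile_eq_of_forall_lt (distributionalTransform_le hF hθ.2.le)
    fun y hy ↦ lt_distributionalTransform hF hθ hy (hx y hy)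

lemma measurable_distributionalTransform (hF : Monotone F) :
    Measurable (distributionalTransform F) := by
  have hFmeas : Measurable F := hF.measurable
  have hleft : Measurable (leftLim F) := hF.leftLim.measurable
  unfold distributionalTransform
  fun_prop

lemma volume_restrict_Ioo_zero_one_Iic (a : ℝ) :
    volume.restrict (Ioo (0 : ℝ) 1) (Iic a) = ENNReal.ofReal (min 1 a) := by
  rw [Measure.restrict_congr_set Ioo_ae_eq_Ioc, Measure.restrict_apply measurableSet_Iic,
    inter_comm, Ioc_inter_Iic, Real.volume_Ioc, sub_zero]

variable (m : Measure ℝ)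

lemma leftLim_cdf_nonneg (x : ℝ) : 0 ≤ leftLim (cdf m) x :=
  (cdf_nonneg m (x - 1)).trans ((monotone_cdf m).le_leftLim (sub_one_lt x))

lemma quantile_cdf_le_iff (hv : v ∈ Ioo 0 1) : quantile (cdf m) v ≤ x ↔ v ≤ cdf m x := by
  obtain ⟨a, ha⟩ := ((tendsto_cdf_atTop m).eventually_const_lt hv.2).exists
  obtain ⟨b, hb⟩ := ((tendsto_cdf_atBot m).eventually_lt_const hv.1).exists
  exact quantile_le_iff ⟨a, ha.le⟩
    ⟨b, fun y hy ↦ ((monotone_cdf m).reflect_lt (hb.trans_le hy)).le⟩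

lemma lt_quantile_cdf_iff (hv : v ∈ Ioo 0 1) : x < quantile (cdf m) v ↔ cdf m x < v := by
  simpa only [not_le] using (quantile_cdf_le_iff m hv).not

lemma le_cdf_quantile_cdf (hv : v ∈ Ioo 0 1) : v ≤ cdf m (quantile (cdf m) v) :=
  (quantile_cdf_le_iff m hv).1 le_rfl

lemma leftLim_cdf_quantile_cdf_le (hv : v ∈ Ioo 0 1) :
    leftLim (cdf m) (quantile (cdf m) v) ≤ v := by
  refine le_of_tendsto ((monotone_cdf m).tendsto_leftLim _) ?_
  filter_upwards [self_mem_nhdsWithin] with y hy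
  exact ((lt_quantile_cdf_iff m hv).1 hy).le

lemma monotoneOn_quantile_cdf : MonotoneOn (quantile (cdf m)) (Ioo 0 1) :=
  fun _ ha _ hb hab ↦ (quantile_cdf_le_iff m ha).2 (hab.trans (le_cdf_quantile_cdf m hb))

lemma aemeasurable_quantile_cdf :
    AEMeasurable (quantile (cdf m)) (volume.restrict (Ioo 0 1)) :=
  aemeasurable_restrict_of_monotoneOn measurableSet_Ioo (monotoneOn_quantile_cdf m)

lemma exists_distributionalTransform_cdf_eq (hv : v ∈ Ioo 0 1) :
    ∃ x, ∃ θ ∈ Icc (0 : ℝ) 1, distributionalTransform (cdf m) (x, θ) = v := by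
  have hjump : v ∈ Icc (leftLim (cdf m) (quantile (cdf m) v)) (cdf m (quantile (cdf m) v)) :=
    ⟨leftLim_cdf_quantile_cdf_le m hv, le_cdf_quantile_cdf m hv⟩
  rw [← segment_eq_Icc (hjump.1.trans hjump.2), segment_eq_image] at hjump
  exact ⟨_, hjump⟩

lemma integrableOn_comp_quantile_cdf {E : Type*} [NormedAddCommGroup E] {ℓ : ℝ → ℝ → E}
    (hℓ : StronglyMeasurable (uncurry ℓ)) {M : ℝ} (hbdd : ∀ v x, ‖ℓ v x‖ ≤ M) :
    IntegrableOn (fun v ↦ ℓ v (quantile (cdf m) v)) (Ioo 0 1) :=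
  Integrable.of_bound (hℓ.aestronglyMeasurable.comp_aemeasurable
    (aemeasurable_id.prodMk (aemeasurable_quantile_cdf m))) M (ae_of_all _ fun v ↦ hbdd v _)

variable [IsProbabilityMeasure m]

lemma map_quantile_cdf : (volume.restrict (Ioo 0 1)).map (quantile (cdf m)) = m := by
  refine Measure.ext_of_Iic _ _ fun x ↦ ?_
  have hpreimage : quantile (cdf m) ⁻¹' Iic x =ᵐ[volume.restrict (Ioo 0 1)] Iic (cdf m x) := by
    rw [eventuallyEq_set]
    filter_upwards [ae_restrict_mem measurableSet_Ioo] with v hv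
    exact quantile_cdf_le_iff m hv
  rw [Measure.map_apply_of_aemeasurable (aemeasurable_quantile_cdf m) measurableSet_Iic,
    measure_congr hpreimage, volume_restrict_Ioo_zero_one_Iic, min_eq_right (cdf_le_one m x),
    ofReal_cdf]

lemma ae_forall_lt_cdf_lt : ∀ᵐ x ∂m, ∀ y < x, cdf m y < cdf m x := by
  have hrat (q : ℚ) : ∀ᵐ x ∂m, (q : ℝ) < x → cdf m q < cdf m x := by
    have hmeas : MeasurableSet {x | (q : ℝ) < x → cdf m q < cdf m x} :=
      measurableSet_Ioi.imp (measurableSet_lt measurable_const (monotone_cdf m).measurable)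
    suffices ∀ᵐ x ∂(volume.restrict (Ioo 0 1)).map (quantile (cdf m)),
        (q : ℝ) < x → cdf m q < cdf m x by rwa [map_quantile_cdf] at this
    rw [ae_map_iff (aemeasurable_quantile_cdf m) hmeas]
    filter_upwards [ae_restrict_mem measurableSet_Ioo] with v hv hq
    exact ((lt_quantile_cdf_iff m hv).1 hq).trans_le (le_cdf_quantile_cdf m hv)
  filter_upwards [ae_all_iff.2 hrat] with x hx y hy
  obtain ⟨q, hyq, hqx⟩ := exists_rat_btwn hy
  exact (monotone_cdf m hyq.le).trans_lt (hx q hqx)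

lemma ae_prod_mem_Ioo_and_forall_lt_cdf_lt :
    ∀ᵐ p ∂m.prod (volume.restrict (Ioo (0 : ℝ) 1)),
      p.2 ∈ Ioo 0 1 ∧ ∀ y < p.1, cdf m y < cdf m p.1 :=
  (Measure.quasiMeasurePreserving_snd.ae (ae_restrict_mem measurableSet_Ioo)).and
    (Measure.quasiMeasurePreserving_fst.ae (ae_forall_lt_cdf_lt m))

lemma measure_Iio_eq_ofReal_leftLim_cdf (x : ℝ) :
    m (Iio x) = ENNReal.ofReal (leftLim (cdf m) x) := by
  simpa only [measure_cdf, sub_zero] using (cdf m).measure_Iio (tendsto_cdf_atBot m) x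

lemma measure_singleton_eq_ofReal_cdf_sub_leftLim (x : ℝ) :
    m {x} = ENNReal.ofReal (cdf m x - leftLim (cdf m) x) := by
  simpa only [measure_cdf] using (cdf m).measure_singleton x

lemma ae_leftLim_cdf_lt_of_eq (x : ℝ) : ∀ᵐ y ∂m, y = x → leftLim (cdf m) y < cdf m y := by
  rcases ((monotone_cdf m).leftLim_le (le_refl x)).eq_or_lt with heq | hlt
  · have hnull : m {x} = 0 := by simp [measure_singleton_eq_ofReal_cdf_sub_leftLim, heq]
    filter_upwards [measure_eq_zero_iff_ae_notMem.1 hnull] with y hne heq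
    exact absurd heq hne
  · exact ae_of_all _ fun y hy ↦ hy ▸ hlt

lemma distributionalTransform_cdf_preimage_Iic_ae_eq (x : ℝ) (hη : η ∈ Icc 0 1) :
    distributionalTransform (cdf m) ⁻¹' Iic (distributionalTransform (cdf m) (x, η))
      =ᵐ[m.prod (volume.restrict (Ioo 0 1))] (Iio x ×ˢ univ ∪ {x} ×ˢ Iic η : Set (ℝ × ℝ)) := by
  rw [eventuallyEq_set]
  filter_upwards [ae_prod_mem_Ioo_and_forall_lt_cdf_lt m,
    Measure.quasiMeasurePreserving_fst.ae (ae_leftLim_cdf_lt_of_eq m x)] with ⟨y, θ⟩ ⟨hθ, hy⟩ hjump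
  simp only [mem_preimage, mem_union, mem_prod, mem_Iio, mem_univ, and_true, mem_singleton_iff,
    mem_Iic]
  rcases lt_trichotomy y x with hyx | rfl | hxy
  · simp only [hyx, true_or, iff_true]
    exact distributionalTransform_le_of_lt (monotone_cdf m) hθ.2.le hη.1 hyx
  · simpa only [lt_irrefl, false_or, true_and] using distributionalTransform_le_iff (hjump rfl)
  · simp only [hxy.not_gt, hxy.ne', false_and, or_self, iff_false, not_le]
    exact (distributionalTransform_le (monotone_cdf m) hη.2).trans_lt
      (lt_distributionalTransform (monotone_cdf m) hθ hxy (hy x hxy))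

lemma measure_distributionalTransform_cdf_preimage_Iic (x : ℝ) (hη : η ∈ Icc 0 1) :
    m.prod (volume.restrict (Ioo 0 1))
        (distributionalTransform (cdf m) ⁻¹' Iic (distributionalTransform (cdf m) (x, η)))
      = ENNReal.ofReal (distributionalTransform (cdf m) (x, η)) := by
  have hdisj : Disjoint (Iio x ×ˢ univ : Set (ℝ × ℝ)) ({x} ×ˢ Iic η) :=
    disjoint_prod.2 (Or.inl (by simp))
  have hjump : 0 ≤ cdf m x - leftLim (cdf m) x :=
    sub_nonneg.2 ((monotone_cdf m).leftLim_le le_rfl)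
  calc
    _ = m (Iio x) * volume.restrict (Ioo (0 : ℝ) 1) univ
        + m {x} * volume.restrict (Ioo (0 : ℝ) 1) (Iic η) := by
      rw [measure_congr (distributionalTransform_cdf_preimage_Iic_ae_eq m x hη),
        measure_union hdisj ((measurableSet_singleton x).prod measurableSet_Iic),
        Measure.prod_prod, Measure.prod_prod]
    _ = ENNReal.ofReal (leftLim (cdf m) x)
        + ENNReal.ofReal (cdf m x - leftLim (cdf m) x) * ENNReal.ofReal η := by
      rw [measure_Iio_eq_ofReal_leftLim_cdf, measure_singleton_eq_ofReal_cdf_sub_leftLim,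
        volume_restrict_Ioo_zero_one_Iic, min_eq_right hη.2]
      simp
    _ = _ := by
      rw [← ENNReal.ofReal_mul hjump, ← ENNReal.ofReal_add (leftLim_cdf_nonneg m x)
        (mul_nonneg hjump hη.1), distributionalTransform_eq_leftLim_add, mul_comm η]

lemma ae_distributionalTransform_cdf_mem_Ioc :
    ∀ᵐ p ∂m.prod (volume.restrict (Ioo (0 : ℝ) 1)),
      distributionalTransform (cdf m) p ∈ Ioc 0 1 := by
  filter_upwards [ae_prod_mem_Ioo_and_forall_lt_cdf_lt m] with ⟨x, θ⟩ ⟨hθ, hx⟩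
  have hx' : x - 1 < x := sub_one_lt x
  exact ⟨(cdf_nonneg m _).trans_lt (lt_distributionalTransform (monotone_cdf m) hθ hx' (hx _ hx')),
    (distributionalTransform_le (monotone_cdf m) hθ.2.le).trans (cdf_le_one m x)⟩

lemma measurePreserving_distributionalTransform_cdf :
    MeasurePreserving (distributionalTransform (cdf m)) (m.prod (volume.restrict (Ioo 0 1)))
      (volume.restrict (Ioo 0 1)) := by
  have hmeas := measurable_distributionalTransform (monotone_cdf m)
  refine ⟨hmeas, (Measure.ext_of_Iic _ _ fun v ↦ ?_).symm⟩
  rw [Measure.map_apply hmeas measurableSet_Iic, volume_restrict_Ioo_zero_one_Iic, eq_comm]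
  rcases le_or_gt v 0 with hv₀ | hv₀
  · rw [ENNReal.ofReal_of_nonpos ((min_le_right _ _).trans hv₀), measure_eq_zero_iff_ae_notMem]
    filter_upwards [ae_distributionalTransform_cdf_mem_Ioc m] with p hp
    exact (hv₀.trans_lt hp.1).not_ge
  rcases lt_or_ge v 1 with hv₁ | hv₁
  · obtain ⟨x, η, hη, rfl⟩ := exists_distributionalTransform_cdf_eq m ⟨hv₀, hv₁⟩
    rw [min_eq_right hv₁.le, measure_distributionalTransform_cdf_preimage_Iic m x hη]
  · have huniv : distributionalTransform (cdf m) ⁻¹' Iic v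
        =ᵐ[m.prod (volume.restrict (Ioo 0 1))] univ := by
      rw [eventuallyEq_univ]
      filter_upwards [ae_distributionalTransform_cdf_mem_Ioc m] with p hp
      exact hp.2.trans hv₁
    rw [measure_congr huniv, min_eq_left hv₁, ← univ_prod_univ, Measure.prod_prod]
    simp

lemma ae_quantile_cdf_distributionalTransform_cdf :
    ∀ᵐ p ∂m.prod (volume.restrict (Ioo (0 : ℝ) 1)),
      quantile (cdf m) (distributionalTransform (cdf m) p) = p.1 := by
  filter_upwards [ae_prod_mem_Ioo_and_forall_lt_cdf_lt m] with p hp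
  exact quantile_distributionalTransform (monotone_cdf m) hp.1 hp.2

theorem extended_change_of_variable_general {E : Type*} [NormedAddCommGroup E] [NormedSpace ℝ E]
    {ℓ : ℝ → ℝ → E} (hℓ : IntegrableOn (fun v ↦ ℓ v (quantile (cdf m) v)) (Ioo 0 1)) :
    ∫ x, (∫ θ in (0 : ℝ)..1, ℓ (distributionalTransform (cdf m) (x, θ)) x) ∂m
      = ∫ v in (0 : ℝ)..1, ℓ v (quantile (cdf m) v) := by
  have hT := measurePreserving_distributionalTransform_cdf m
  have hae : (fun p ↦ ℓ (distributionalTransform (cdf m) p)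
        (quantile (cdf m) (distributionalTransform (cdf m) p)))
      =ᵐ[m.prod (volume.restrict (Ioo 0 1))]
        fun p ↦ ℓ (distributionalTransform (cdf m) p) p.1 := by
    filter_upwards [ae_quantile_cdf_distributionalTransform_cdf m] with p hp
    rw [hp]
  simp only [intervalIntegral.integral_of_le zero_le_one, integral_Ioc_eq_integral_Ioo]
  rw [← integral_prod _ ((hT.integrable_comp_of_integrable hℓ).congr hae), ← integral_congr_ae hae]
  conv_rhs => rw [← hT.map_eq]
  exact (integral_map hT.aemeasurable (hT.map_eq ▸ hℓ.aestronglyMeasurable)).symm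

end

/-- **Extended change of variable formula**: for a bounded measurable `ℓ : [0,1] × ℝ → ℝ`
and `F` the CDF of a probability measure `m` on `ℝ`,
`∫_ℝ (∫₀¹ ℓ((1-θ)F(x⁻)+θF(x), x) dθ) m(dx) = ∫₀¹ ℓ(v, F⁻¹(v)) dv`,
where `F(x⁻)` is the left limit of `F` at `x` and `F⁻¹(v) = inf {x | v ≤ F x}`. -/
theorem extended_change_of_variable
    (m : Measure ℝ) [IsProbabilityMeasure m]
    (ℓ : ℝ → ℝ → ℝ)
    (hmeas : Measurable fun p : ℝ × ℝ => ℓ p.1 p.2)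
    (M : ℝ) (hbdd : ∀ v x : ℝ, |ℓ v x| ≤ M)
    (F : ℝ → ℝ) (hF : ∀ x, F x = (m (Iic x)).toReal) :
    ∫ x, (∫ θ in (0:ℝ)..1, ℓ ((1 - θ) * Function.leftLim F x + θ * F x) x) ∂m
      = ∫ v in (0:ℝ)..1, ℓ v (sInf {x : ℝ | v ≤ F x}) := by
  obtain rfl : F = ProbabilityTheory.cdf m :=
    funext fun x ↦ (hF x).trans (ProbabilityTheory.cdf_eq_real m x).symm
  exact extended_change_of_variable_general m
    (integrableOn_comp_quantile_cdf m hmeas.stronglyMeasurable hbdd)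
end

section
/- Let (F_n)_{n≥1} and (G_n)_{n≥1} be sequences of CDFs on ℝ and let F, G be CDFs on ℝ such that: (a) F_n(x) → F(x) for every x ∈ ℝ with ΔF(x) = 0; (b) G_n(x) → G(x) for every x ∈ ℝ with ΔG(x) = 0; (c) ΔF(x)·ΔG(x) = 0 for every x ∈ ℝ (F and G have no common jump point). Then for Lebesgue-almost every v ∈ (0,1), G_n(F_n⁻¹(v)) → G(F⁻¹(v)) and G_n(F_n⁻¹(v)⁻) → G(F⁻¹(v)⁻) as n → ∞. -/
open MeasureTheory Filter Set

noncomputable section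

/-- A cumulative distribution function on ℝ: nondecreasing, right-continuous,
tending to `0` at `-∞` and to `1` at `+∞`. -/
def IsCDF (F : ℝ → ℝ) : Prop :=
  Monotone F ∧ (∀ x : ℝ, ContinuousWithinAt F (Ici x) x) ∧
    Tendsto F atBot (nhds 0) ∧ Tendsto F atTop (nhds 1)

/-- The pseudo-inverse `F⁻¹(v) = inf {x | v ≤ F x}` of a CDF. -/
def cdfInv (F : ℝ → ℝ) (v : ℝ) : ℝ := sInf {x : ℝ | v ≤ F x}

/-!
Write `x = F⁻¹(v)`. Outside countably many `v`, the level set `{F = v}` has at most one point, so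
`F` crosses `v` strictly at `x`, which forces `Fₙ⁻¹(v) → x`. Moreover, if `G` jumps at `x`, then
`F` is continuous there and `v = F x`; hence only countably many `v` lead to a jump of `G`. For all
other `v`, trapping `Fₙ⁻¹(v)` between two points near `x` at which `Gₙ → G` gives both limits.
-/

open Topology

section MonotoneFunctions

variable {ι α β : Type*} [ConditionallyCompleteLinearOrder β] [TopologicalSpace β]
  [OrderTopology β]

lemma dense_setOf_continuousAt_of_monotone [SecondCountableTopology β] {f : ℝ → β}
    (hf : Monotone f) : Dense {x | ContinuousAt f x} := by
  simpa only [compl_ofPred, not_not] using hf.countable_not_continuousAt.dense_compl ℝ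

variable [LinearOrder α] [TopologicalSpace α] [OrderTopology α]

lemma continuousAt_iff_leftLim_eq_of_continuousWithinAt_Ici {f : α → β} {x : α}
    (hf : Monotone f) (hx : ContinuousWithinAt f (Ici x) x) :
    ContinuousAt f x ↔ Function.leftLim f x = f x := by
  rw [← hf.continuousWithinAt_Iio_iff_leftLim_eq, continuousAt_iff_continuous_left'_right',
    and_iff_left (hx.mono Ioi_subset_Ici_self)]

lemma tendsto_of_mem_Icc_leftLim [DenselyOrdered α] [NoMinOrder α] [NoMaxOrder α]
    {l : Filter ι} {g : α → β} {gn : ι → α → β} {D : Set α} {x : α} {u : ι → α} {w : ι → β}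
    (hgn : ∀ i, Monotone (gn i)) (hD : Dense D)
    (hlim : ∀ y ∈ D, Tendsto (fun i => gn i y) l (𝓝 (g y))) (hg : ContinuousAt g x)
    (hu : Tendsto u l (𝓝 x))
    (hw : ∀ i, w i ∈ Icc (Function.leftLim (gn i) (u i)) (gn i (u i))) :
    Tendsto w l (𝓝 (g x)) := by
  refine tendsto_order.2 ⟨fun p hp => ?_, fun p hp => ?_⟩
  · obtain ⟨c, hcx, hc⟩ := exists_Ioc_subset_of_mem_nhds (hg.eventually_const_lt hp) (exists_lt x)
    obtain ⟨d, hdD, hcd, hdx⟩ := hD.exists_between hcx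
    filter_upwards [(hlim d hdD).eventually_const_lt (hc ⟨hcd, hdx.le⟩),
      hu.eventually_const_lt hdx] with i hpd hdu
    exact hpd.trans_le (((hgn i).le_leftLim hdu).trans (hw i).1)
  · obtain ⟨c, hxc, hc⟩ := exists_Ico_subset_of_mem_nhds (hg.eventually_lt_const hp) (exists_gt x)
    obtain ⟨d, hdD, hxd, hdc⟩ := hD.exists_between hxc
    filter_upwards [(hlim d hdD).eventually_lt_const (hc ⟨hxd.le, hdc⟩),
      hu.eventually_lt_const hxd] with i hdp hud
    exact ((hw i).2.trans (hgn i hud.le)).trans_lt hdp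

end MonotoneFunctions

section PseudoInverse

variable {ι : Type*} {F : ℝ → ℝ} {a b v y : ℝ}

lemma cdfInv_mem_Icc (hF : Monotone F) (ha : F a < v) (hb : v ≤ F b) :
    cdfInv F v ∈ Icc a b := by
  have ha_lower : a ∈ lowerBounds {x | v ≤ F x} :=
    fun x hx => (hF.reflect_lt (ha.trans_le hx)).le
  exact ⟨le_csInf ⟨b, hb⟩ ha_lower, csInf_le ⟨a, ha_lower⟩ hb⟩

lemma apply_lt_of_lt_cdfInv (hF : Monotone F) (ha : F a < v) (hy : y < cdfInv F v) :
    F y < v := by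
  contrapose! hy
  exact (cdfInv_mem_Icc hF ha hy).2

lemma le_apply_of_cdfInv_lt (hF : Monotone F) (hb : v ≤ F b) (hy : cdfInv F v < y) :
    v ≤ F y := by
  contrapose! hy
  exact (cdfInv_mem_Icc hF hy hb).1

lemma lt_apply_of_cdfInv_lt (hF : Monotone F) (hb : v ≤ F b)
    (hv : ¬∃ x y, x < y ∧ F x = v ∧ F y = v) (hy : cdfInv F v < y) : v < F y := by
  obtain ⟨z, hz, hzy⟩ := exists_between hy
  have hvz : v ≤ F z := le_apply_of_cdfInv_lt hF hb hz
  refine (hvz.trans (hF hzy.le)).lt_of_ne fun hvy => hv ⟨z, y, hzy, ?_, hvy.symm⟩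
  exact le_antisymm ((hF hzy.le).trans_eq hvy.symm) hvz

lemma apply_cdfInv_of_continuousAt (hF : Monotone F) (ha : F a < v) (hb : v ≤ F b)
    (hx : ContinuousAt F (cdfInv F v)) : F (cdfInv F v) = v := by
  apply le_antisymm
  · refine le_of_tendsto (hx.continuousWithinAt (s := Iio (cdfInv F v))).tendsto ?_
    filter_upwards [self_mem_nhdsWithin] with y hy using (apply_lt_of_lt_cdfInv hF ha hy).le
  · refine ge_of_tendsto (hx.continuousWithinAt (s := Ioi (cdfInv F v))).tendsto ?_
    filter_upwards [self_mem_nhdsWithin] with y hy using le_apply_of_cdfInv_lt hF hb hy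

lemma tendsto_cdfInv {l : Filter ι} {Fn : ι → ℝ → ℝ} {D : Set ℝ} {x : ℝ}
    (hFn : ∀ i, Monotone (Fn i)) (hD : Dense D)
    (hlim : ∀ y ∈ D, Tendsto (fun i => Fn i y) l (𝓝 (F y)))
    (hlt : ∀ y < x, F y < v) (hgt : ∀ y > x, v < F y) :
    Tendsto (fun i => cdfInv (Fn i) v) l (𝓝 x) := by
  refine (nhds_basis_Ioo x).tendsto_right_iff.2 fun ⟨p, q⟩ ⟨hpx, hxq⟩ => ?_
  obtain ⟨c, hcD, hpc, hcx⟩ := hD.exists_between hpx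
  obtain ⟨d, hdD, hxd, hdq⟩ := hD.exists_between hxq
  filter_upwards [(hlim c hcD).eventually_lt_const (hlt c hcx),
    (hlim d hdD).eventually_const_lt (hgt d hxd)] with i hc hd
  exact Icc_subset_Ioo hpc hdq (cdfInv_mem_Icc (hFn i) hc hd.le)

end PseudoInverse

namespace IsCDF

variable {F G : ℝ → ℝ} {v x : ℝ}

lemma exists_apply_lt (hF : IsCDF F) (hv : 0 < v) : ∃ a, F a < v :=
  (hF.2.2.1.eventually_lt_const hv).exists

lemma exists_lt_apply (hF : IsCDF F) (hv : v < 1) : ∃ b, v < F b :=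
  (hF.2.2.2.eventually_const_lt hv).exists

lemma continuousAt_iff (hF : IsCDF F) : ContinuousAt F x ↔ Function.leftLim F x = F x :=
  continuousAt_iff_leftLim_eq_of_continuousWithinAt_Ici hF.1 (hF.2.1 x)

lemma continuousAt_or_continuousAt (hF : IsCDF F) (hG : IsCDF G)
    (h : (F x - Function.leftLim F x) * (G x - Function.leftLim G x) = 0) :
    ContinuousAt F x ∨ ContinuousAt G x := by
  rw [hF.continuousAt_iff, hG.continuousAt_iff]
  exact (mul_eq_zero.1 h).imp (fun hF0 => (sub_eq_zero.1 hF0).symm)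
    fun hG0 => (sub_eq_zero.1 hG0).symm

end IsCDF

theorem composed_cdf_convergence_general {ι : Type*} {l : Filter ι} {F G : ℝ → ℝ}
    {Fn Gn : ι → ℝ → ℝ} (μ : Measure ℝ) [NullSingletonClass μ]
    (hF : Monotone F) (hG : Monotone G)
    (hFn : ∀ i, Monotone (Fn i)) (hGn : ∀ i, Monotone (Gn i))
    (hFlim : ∀ x, ContinuousAt F x → Tendsto (fun i => Fn i x) l (𝓝 (F x)))
    (hGlim : ∀ x, ContinuousAt G x → Tendsto (fun i => Gn i x) l (𝓝 (G x)))
    (hFG : ∀ x, ContinuousAt F x ∨ ContinuousAt G x) :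
    ∀ᵐ v ∂μ, (∃ a, F a < v) → (∃ b, v < F b) →
      Tendsto (fun i => Gn i (cdfInv (Fn i) v)) l (𝓝 (G (cdfInv F v))) ∧
      Tendsto (fun i => Function.leftLim (Gn i) (cdfInv (Fn i) v)) l
        (𝓝 (Function.leftLim G (cdfInv F v))) := by
  filter_upwards [hF.countable_setOfPred_two_preimages.ae_notMem μ,
    (hG.countable_not_continuousAt.image F).ae_notMem μ] with v hlevel hjump ⟨a, ha⟩ ⟨b, hb⟩
  have hGx : ContinuousAt G (cdfInv F v) := by
    by_contra hGx
    have hFx : ContinuousAt F (cdfInv F v) := (hFG _).resolve_right hGx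
    exact hjump ⟨_, hGx, apply_cdfInv_of_continuousAt hF ha hb.le hFx⟩
  have hinv : Tendsto (fun i => cdfInv (Fn i) v) l (𝓝 (cdfInv F v)) :=
    tendsto_cdfInv hFn (dense_setOf_continuousAt_of_monotone hF) hFlim
      (fun _ hy => apply_lt_of_lt_cdfInv hF ha hy)
      (fun _ hy => lt_apply_of_cdfInv_lt hF hb.le hlevel hy)
  have hlim {w : ι → ℝ} := tendsto_of_mem_Icc_leftLim (w := w) hGn
    (dense_setOf_continuousAt_of_monotone hG) hGlim hGx hinv
  rw [hGx.continuousWithinAt.leftLim_eq]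
  exact ⟨hlim fun i => ⟨(hGn i).leftLim_le le_rfl, le_rfl⟩,
    hlim fun i => ⟨le_rfl, (hGn i).leftLim_le le_rfl⟩⟩

/-- **Convergence of composed CDFs**: if `Fₙ → F` and `Gₙ → G` at all continuity points
of the limits, and `F` and `G` have no common jump point, then for Lebesgue-a.e.
`v ∈ (0,1)`, `Gₙ(Fₙ⁻¹(v)) → G(F⁻¹(v))` and `Gₙ(Fₙ⁻¹(v)⁻) → G(F⁻¹(v)⁻)`. -/
theorem composed_cdf_convergence
    (F G : ℝ → ℝ) (Fn Gn : ℕ → ℝ → ℝ)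
    (hF : IsCDF F) (hG : IsCDF G)
    (hFn : ∀ n, IsCDF (Fn n)) (hGn : ∀ n, IsCDF (Gn n))
    (ha : ∀ x : ℝ, Function.leftLim F x = F x →
      Tendsto (fun n => Fn n x) atTop (nhds (F x)))
    (hb : ∀ x : ℝ, Function.leftLim G x = G x →
      Tendsto (fun n => Gn n x) atTop (nhds (G x)))
    (hc : ∀ x : ℝ, (F x - Function.leftLim F x) * (G x - Function.leftLim G x) = 0) :
    ∀ᵐ v ∂(volume.restrict (Ioo (0:ℝ) 1)),
      Tendsto (fun n => Gn n (cdfInv (Fn n) v)) atTop (nhds (G (cdfInv F v))) ∧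
      Tendsto (fun n => Function.leftLim (Gn n) (cdfInv (Fn n) v)) atTop
        (nhds (Function.leftLim G (cdfInv F v))) := by
  filter_upwards [ae_restrict_of_ae (composed_cdf_convergence_general volume hF.1 hG.1
      (fun n => (hFn n).1) (fun n => (hGn n).1) (fun x hx => ha x (hF.continuousAt_iff.1 hx))
      (fun x hx => hb x (hG.continuousAt_iff.1 hx))
      fun x => hF.continuousAt_or_continuousAt hG (hc x)),
    ae_restrict_mem measurableSet_Ioo] with v hv hv01
  exact hv (hF.exists_apply_lt hv01.1) (hF.exists_lt_apply hv01.2)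
end
end

section
/- Let u : (0,+∞) × ℝ → [0,1] be measurable, with u(t,·) right-continuous for every t > 0, and assume ∂_t u ≤ 0 in the distributional sense on (0,+∞)×ℝ, i.e. ∫₀^{+∞}∫_ℝ u(t,x) ∂_tΦ(t,x) dx dt ≥ 0 for every nonnegative smooth function Φ compactly supported in (0,+∞)×ℝ. Then there exists a Lebesgue-null set 𝒯 ⊂ (0,+∞) such that for all t₁, t₂ ∈ (0,+∞)∖𝒯 with t₁ ≤ t₂ and every x ∈ ℝ, u(t₂,x) ≤ u(t₁,x). -/
open MeasureTheory Filter Set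

/-!
Averaging `u` in space against a fixed bump `ψ` turns the hypothesis into a one-dimensional one:
`f t = ∫ u(t, x) ψ(x) dx` satisfies `f' ≤ 0` as a distribution. For a mollifier `ρ` and `a ≤ b`,
the function `t ↦ ∫ s in (a - t)..(b - t), ρ s` is an admissible test function with derivative
`ρ(a - t) - ρ(b - t)`, so testing with it says exactly `(ρ ⋆ f) b ≤ (ρ ⋆ f) a`. Shrinking `ρ` gives
`f b ≤ f a` at Lebesgue points, that is, off a null set of times depending on `ψ`. Countably many
bumps `ψ`, with rational centres and radii `1 / (n + 1)`, suffice: if `u(t₂, x) > u(t₁, x)`, then by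
right continuity the same holds on some `[x, b)`, which contains the support of one of them.
-/

open Function Metric
open scoped Topology ContDiff Convolution

section LocalIntegrability

variable {X Y : Type*} [TopologicalSpace X] [MeasurableSpace X] [TopologicalSpace Y]
  [MeasurableSpace Y]

theorem locallyIntegrableOn_prod_univ_of_measurable_of_norm_le {E : Type*} [NormedAddCommGroup E]
    [MeasurableSpace E] [BorelSpace E] [SecondCountableTopology E] {μ : Measure (X × Y)}
    [IsLocallyFiniteMeasure μ] {s : Set X} {u : X → Y → E} {C : ℝ} (hs : MeasurableSet s)
    (hu : Measurable fun p : s × Y => u p.1 p.2) (hC : ∀ t ∈ s, ∀ x, ‖u t x‖ ≤ C) :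
    LocallyIntegrableOn (uncurry u) (s ×ˢ univ) μ := by
  have hsY : MeasurableSet (s ×ˢ (univ : Set Y)) := hs.prod .univ
  let toSubtype (p : ↥(s ×ˢ (univ : Set Y))) : s × Y := (⟨p.1.1, p.2.1⟩, p.1.2)
  have htoSubtype : Measurable toSubtype :=
    (measurable_subtype_coe.fst.subtype_mk).prodMk measurable_subtype_coe.snd
  have hmeas : AEStronglyMeasurable (uncurry u) (μ.restrict (s ×ˢ univ)) :=
    (aemeasurable_restrict_of_measurable_subtype hsY (hu.comp htoSubtype)).aestronglyMeasurable
  intro p _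
  obtain ⟨V, hV, hμV⟩ := μ.finiteAt_nhdsWithin p (s ×ˢ univ)
  refine ⟨V ∩ s ×ˢ univ, inter_mem hV self_mem_nhdsWithin,
    .of_bound ((measure_mono inter_subset_left).trans_lt hμV) (hmeas.mono_set inter_subset_right) C
      (ae_restrict_of_ae_restrict_of_subset inter_subset_right ?_)⟩
  exact ae_restrict_of_forall_mem hsY fun q hq => hC q.1 hq.1 q.2

variable [OpensMeasurableSpace X] [OpensMeasurableSpace Y] [SecondCountableTopology Y] [T2Space X]
  [T2Space Y] {μ : Measure X} {ν : Measure Y} [SFinite μ] [SFinite ν] {ψ : Y → ℝ}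

theorem integrable_mul_prod_restrict {s K : Set X} {F : X × Y → ℝ}
    (hF : LocallyIntegrableOn F (s ×ˢ univ) (μ.prod ν)) (hψ : Continuous ψ)
    (hψc : HasCompactSupport ψ) (hK : IsCompact K) (hKs : K ⊆ s) :
    Integrable (fun p : X × Y => F p * ψ p.2) ((μ.restrict K).prod ν) := by
  have hcompact : IsCompact (K ×ˢ tsupport ψ) := hK.prod hψc
  have hint : IntegrableOn (fun p : X × Y => F p * ψ p.2) (K ×ˢ tsupport ψ) (μ.prod ν) :=
    (hF.integrableOn_compact_subset (prod_mono hKs (subset_univ _)) hcompact).mul_continuousOn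
      (hψ.comp continuous_snd).continuousOn hcompact
  have hint' : IntegrableOn (fun p : X × Y => F p * ψ p.2) (K ×ˢ univ) (μ.prod ν) :=
    hint.of_forall_sdiff_eq_zero (hK.measurableSet.prod .univ) fun p hp => by
      have : p.2 ∉ tsupport ψ := fun h => hp.2 ⟨hp.1.1, h⟩
      rw [image_eq_zero_of_notMem_tsupport this, mul_zero]
  rwa [IntegrableOn, ← Measure.prod_restrict, Measure.restrict_univ] at hint'

variable [LocallyCompactSpace X] {U : Set X} {u : X → Y → ℝ}

theorem locallyIntegrableOn_integral_mul (hU : IsOpen U)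
    (hu : LocallyIntegrableOn (uncurry u) (U ×ˢ univ) (μ.prod ν)) (hψ : Continuous ψ)
    (hψc : HasCompactSupport ψ) :
    LocallyIntegrableOn (fun t => ∫ x, u t x * ψ x ∂ν) U μ :=
  (locallyIntegrableOn_iff hU.isLocallyClosed).2 fun _ hKU hK =>
    (integrable_mul_prod_restrict hu hψ hψc hK hKU).integral_prod_left

theorem ae_restrict_integrable_mul [SecondCountableTopology X] (hU : IsOpen U)
    (hu : LocallyIntegrableOn (uncurry u) (U ×ˢ univ) (μ.prod ν)) (hψ : Continuous ψ)
    (hψc : HasCompactSupport ψ) :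
    ∀ᵐ t ∂μ.restrict U, Integrable (fun x => u t x * ψ x) ν := by
  rw [ae_restrict_iff' hU.measurableSet]
  refine measure_null_of_locally_null _ fun t ht => ?_
  have htU : t ∈ U := of_not_not fun h => ht fun h' => absurd h' h
  obtain ⟨K, hK, htK, hKU⟩ := exists_compact_subset hU htU
  have hae : ∀ᵐ s ∂μ, s ∈ K → Integrable (fun x => u s x * ψ x) ν :=
    (ae_restrict_iff' hK.measurableSet).1
      (integrable_mul_prod_restrict hu hψ hψc hK hKU).prod_right_ae
  refine ⟨_, inter_mem_nhdsWithin _ (mem_interior_iff_mem_nhds.1 htK), measure_mono_null ?_ hae⟩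
  exact fun s hs h => hs.1 fun _ => h hs.2

end LocalIntegrability

theorem tsupport_mul_prod_subset {X Y α : Type*} [TopologicalSpace X] [TopologicalSpace Y]
    [MulZeroClass α] (φ : X → α) (ψ : Y → α) :
    tsupport (fun p : X × Y => φ p.1 * ψ p.2) ⊆ tsupport φ ×ˢ tsupport ψ :=
  closure_minimal
    (fun _ hp => ⟨subset_tsupport _ (left_ne_zero_of_mul hp),
      subset_tsupport _ (right_ne_zero_of_mul hp)⟩)
    ((isClosed_tsupport _).prod (isClosed_tsupport _))

theorem integral_mul_lt_integral_mul {X : Type*} [MeasurableSpace X] {μ : Measure X}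
    {v w ψ : X → ℝ} (hψ0 : ∀ y, 0 ≤ ψ y) (hψ : μ (support ψ) ≠ 0)
    (hv : Integrable (fun y => v y * ψ y) μ) (hw : Integrable (fun y => w y * ψ y) μ)
    (hlt : ∀ y ∈ support ψ, v y < w y) : ∫ y, v y * ψ y ∂μ < ∫ y, w y * ψ y ∂μ := by
  have hle : ∀ y, v y * ψ y ≤ w y * ψ y := fun y => by
    by_cases hy : y ∈ support ψ
    · exact mul_le_mul_of_nonneg_right (hlt y hy).le (hψ0 y)
    · simp [notMem_support.1 hy]
  refine (integral_mono hv hw hle).lt_of_ne fun heq => hψ ?_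
  have hae := (integral_eq_iff_of_ae_le hv hw (.of_forall hle)).1 heq
  exact measure_mono_null (fun y hy h => (hlt y hy).ne (mul_right_cancel₀ hy h)) hae

theorem ae_convolution_bump_tendsto_of_locallyIntegrableOn {G E ι : Type*}
    [NormedAddCommGroup G] [NormedSpace ℝ G] [FiniteDimensional ℝ G] [MeasurableSpace G]
    [BorelSpace G] [NormedAddCommGroup E] [NormedSpace ℝ E] [CompleteSpace E] {μ : Measure G}
    [μ.IsAddHaarMeasure]
    {φ : ι → ContDiffBump (0 : G)} {l : Filter ι} {K : ℝ} {U : Set G} {g : G → E}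
    (hφ : Tendsto (fun i => (φ i).rOut) l (𝓝 0)) (hφK : ∀ᶠ i in l, (φ i).rOut ≤ K * (φ i).rIn)
    (hU : IsOpen U) (hg : LocallyIntegrableOn g U μ) :
    ∀ᵐ x ∂μ.restrict U,
      Tendsto (fun i => ((φ i).normed μ ⋆[ContinuousLinearMap.lsmul ℝ ℝ, μ] g) x) l (𝓝 (g x)) := by
  obtain ⟨V, hV, hUV, hgV⟩ := hg.exists_nat_integrableOn
  have hlim : ∀ n, ∀ᵐ x ∂μ, Tendsto (fun i => ((φ i).normed μ
      ⋆[ContinuousLinearMap.lsmul ℝ ℝ, μ] (V n ∩ U).indicator g) x) l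
      (𝓝 ((V n ∩ U).indicator g x)) := fun n =>
    ContDiffBump.ae_convolution_tendsto_right_of_locallyIntegrable hφ hφK
      ((hgV n).integrable_indicator ((hV n).inter hU).measurableSet).locallyIntegrable
  rw [ae_restrict_iff' hU.measurableSet]
  filter_upwards [ae_all_iff.2 hlim] with x hx hxU
  obtain ⟨n, hxn⟩ := mem_iUnion.1 (hUV hxU)
  obtain ⟨ε, hε, hball⟩ := Metric.isOpen_iff.1 ((hV n).inter hU) x ⟨hxn, hxU⟩
  have hlim' := hx n
  rw [indicator_of_mem (show x ∈ V n ∩ U from ⟨hxn, hxU⟩)] at hlim'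
  refine hlim'.congr' ?_
  filter_upwards [hφ.eventually_lt_const hε] with i hi
  refine integral_congr_ae (.of_forall fun y => ?_)
  by_cases hy : y ∈ support ((φ i).normed μ)
  · have : x - y ∈ V n ∩ U := hball <| by
      rw [(φ i).support_normed_eq, mem_ball_zero_iff] at hy
      rw [mem_ball_iff_norm]
      simpa using hy.trans hi
    simp only [indicator_of_mem this]
  · simp [notMem_support.1 hy]

/-- The bump function centred at `c` of outer radius `1 / (n + 1)` and inner radius half of that.
Centred at `0` it serves, once normalised, as a mollifier in time; centred at the rationals it
gives a countable family of test functions in space. -/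
noncomputable def shrinkingBump {G : Type*} (c : G) (n : ℕ) : ContDiffBump c where
  rIn := 1 / (n + 1) / 2
  rOut := 1 / (n + 1)
  rIn_pos := by positivity
  rIn_lt_rOut := half_lt_self (by positivity)

section OneDim

/-- The inequality `f' ≤ 0` in the sense of distributions on the open set `I ⊆ ℝ`, tested against
nonnegative smooth functions with compact support in `I`. -/
def IsDistribAntitoneOn (f : ℝ → ℝ) (I : Set ℝ) : Prop :=
  ∀ φ : ℝ → ℝ, ContDiff ℝ ∞ φ → (∀ t, 0 ≤ φ t) → HasCompactSupport φ → tsupport φ ⊆ I →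
    0 ≤ ∫ t in I, f t * deriv φ t

/-- The integral of `ρ` over the moving window `[a - t, b - t]`, as a function of `t`. For a
mollifier `ρ` it is the test function that compares `ρ ⋆ f` at the points `a` and `b`. -/
noncomputable def windowIntegral (ρ : ℝ → ℝ) (a b t : ℝ) : ℝ := ∫ s in (a - t)..(b - t), ρ s

variable {ρ : ℝ → ℝ} {a b : ℝ}

theorem hasDerivAt_windowIntegral (hρ : Continuous ρ) (a b t : ℝ) :
    HasDerivAt (windowIntegral ρ a b) (ρ (a - t) - ρ (b - t)) t := by
  have hprim : ∀ x, HasDerivAt (fun y => ∫ s in (0 : ℝ)..y, ρ s) (ρ x) x := fun x =>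
    (hρ.integral_hasStrictDerivAt 0 x).hasDerivAt
  have hdiff := ((hprim (b - t)).comp_const_sub b t).sub ((hprim (a - t)).comp_const_sub a t)
  refine (hdiff.congr_of_eventuallyEq (.of_forall fun y => ?_)).congr_deriv (by ring)
  exact (intervalIntegral.integral_interval_sub_left (hρ.intervalIntegrable _ _)
    (hρ.intervalIntegrable _ _)).symm

theorem contDiff_windowIntegral (hρ : ContDiff ℝ ∞ ρ) (a b : ℝ) :
    ContDiff ℝ ∞ (windowIntegral ρ a b) := by
  have hderiv := hasDerivAt_windowIntegral hρ.continuous a b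
  refine contDiff_infty_iff_deriv.2 ⟨fun t => (hderiv t).differentiableAt, ?_⟩
  rw [funext fun t => (hderiv t).deriv]
  fun_prop

theorem windowIntegral_nonneg (hρ : ∀ s, 0 ≤ ρ s) (hab : a ≤ b) (t : ℝ) :
    0 ≤ windowIntegral ρ a b t :=
  intervalIntegral.integral_nonneg (by linarith) fun s _ => hρ s

theorem tsupport_windowIntegral_subset {r : ℝ} (hρ : support ρ ⊆ ball 0 r) (hab : a ≤ b) :
    tsupport (windowIntegral ρ a b) ⊆ Icc (a - r) (b + r) := by
  refine closure_minimal (fun t ht => by_contra fun htI => ht ?_) isClosed_Icc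
  refine intervalIntegral.integral_zero_ae (.of_forall fun s hs => ?_)
  refine notMem_support.1 fun hsρ => htI ?_
  have hsr := hρ hsρ
  rw [Real.ball_eq_Ioo] at hsr
  rw [uIoc_of_le (by linarith)] at hs
  exact ⟨by linarith [hsr.2, hs.1], by linarith [hsr.1, hs.2]⟩

theorem IsDistribAntitoneOn.convolution_le {f : ℝ → ℝ} {I : Set ℝ} {r : ℝ}
    (hf : IsDistribAntitoneOn f I) (hfi : LocallyIntegrableOn f I) (hρ : ContDiff ℝ ∞ ρ)
    (hρ0 : ∀ s, 0 ≤ ρ s) (hρr : support ρ ⊆ ball 0 r) (hab : a ≤ b)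
    (hI : Icc (a - r) (b + r) ⊆ I) :
    (ρ ⋆[ContinuousLinearMap.lsmul ℝ ℝ] f) b ≤ (ρ ⋆[ContinuousLinearMap.lsmul ℝ ℝ] f) a := by
  have hφ := tsupport_windowIntegral_subset hρr hab
  have hint : ∀ c ∈ Icc a b, Integrable fun t => ρ (c - t) * f t := fun c hc => by
    have hsupp : (support fun t => ρ (c - t) * f t) ⊆ Icc (a - r) (b + r) := fun t ht => by
      have hball := hρr (left_ne_zero_of_mul ht)
      rw [Real.ball_eq_Ioo] at hball
      exact ⟨by linarith [hball.2, hc.1], by linarith [hball.1, hc.2]⟩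
    rw [← integrableOn_iff_integrable_of_support_subset hsupp]
    exact (hfi.integrableOn_compact_subset hI isCompact_Icc).continuousOn_mul
      (hρ.continuous.comp (continuous_const.sub continuous_id)).continuousOn isCompact_Icc
  have htest := hf _ (contDiff_windowIntegral hρ a b) (windowIntegral_nonneg hρ0 hab)
    (isCompact_Icc.of_isClosed_subset (isClosed_tsupport _) hφ) (hφ.trans hI)
  rw [setIntegral_eq_integral_of_forall_compl_eq_zero fun t ht => by
    rw [deriv_of_notMem_tsupport fun h => ht (hI (hφ h)), mul_zero]] at htest
  rw [← sub_nonneg, convolution_lsmul_swap, convolution_lsmul_swap]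
  simp only [smul_eq_mul]
  rw [← integral_sub (hint a (left_mem_Icc.2 hab)) (hint b (right_mem_Icc.2 hab))]
  refine htest.trans_eq (integral_congr_ae (.of_forall fun t => ?_))
  simp only [(hasDerivAt_windowIntegral hρ.continuous a b t).deriv]
  ring

theorem IsDistribAntitoneOn.exists_null_antitoneOn {f : ℝ → ℝ} {I : Set ℝ} (hI : IsOpen I)
    (hIc : I.OrdConnected) (hf : IsDistribAntitoneOn f I) (hfi : LocallyIntegrableOn f I) :
    ∃ T, volume T = 0 ∧ AntitoneOn f (I \ T) := by
  have hr : Tendsto (fun n : ℕ => (shrinkingBump (0 : ℝ) n).rOut) atTop (𝓝 0) :=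
    tendsto_one_div_add_atTop_nhds_zero_nat
  have hlim := ae_convolution_bump_tendsto_of_locallyIntegrableOn (K := 2) hr
    (.of_forall fun n => (mul_div_cancel₀ _ two_ne_zero).ge) hI hfi
  refine ⟨_, (ae_restrict_iff' hI.measurableSet).1 hlim, ?_⟩
  intro a ha b hb hab
  refine le_of_tendsto_of_tendsto (not_not.1 hb.2 hb.1) (not_not.1 ha.2 ha.1) ?_
  have hleft : ∀ᶠ n in atTop, a - (shrinkingBump (0 : ℝ) n).rOut ∈ I :=
    (hr.const_sub a).eventually_mem (by simpa using hI.mem_nhds ha.1)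
  have hright : ∀ᶠ n in atTop, b + (shrinkingBump (0 : ℝ) n).rOut ∈ I :=
    (hr.const_add b).eventually_mem (by simpa using hI.mem_nhds hb.1)
  filter_upwards [hleft, hright] with n hn hn'
  exact hf.convolution_le hfi (ContDiffBump.contDiff_normed _) (ContDiffBump.nonneg_normed _)
    (ContDiffBump.support_normed_eq _).subset hab (hIc.out hn hn')

end OneDim

section Slices

variable {E : Type*} [NormedAddCommGroup E] [NormedSpace ℝ E] [MeasurableSpace E]

/-- The inequality `∂ₜ u ≤ 0` in the sense of distributions on `I × E`, for an open set `I ⊆ ℝ` of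
times and the measure `ν` on the space `E`. The pairing with a test function is an iterated
integral, in space first. -/
def IsDistribTimeAntitoneOn (u : ℝ → E → ℝ) (I : Set ℝ) (ν : Measure E) : Prop :=
  ∀ Φ : ℝ → E → ℝ, ContDiff ℝ ∞ (fun p : ℝ × E => Φ p.1 p.2) → (∀ t x, 0 ≤ Φ t x) →
    HasCompactSupport (fun p : ℝ × E => Φ p.1 p.2) →
    tsupport (fun p : ℝ × E => Φ p.1 p.2) ⊆ I ×ˢ univ →
    0 ≤ ∫ t in I, ∫ x, u t x * deriv (fun s => Φ s x) t ∂ν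

variable {u : ℝ → E → ℝ} {I : Set ℝ} {ν : Measure E} {ψ : E → ℝ}

theorem IsDistribTimeAntitoneOn.integral_mul (hu : IsDistribTimeAntitoneOn u I ν)
    (hψ : ContDiff ℝ ∞ ψ) (hψ0 : ∀ x, 0 ≤ ψ x) (hψc : HasCompactSupport ψ) :
    IsDistribAntitoneOn (fun t => ∫ x, u t x * ψ x ∂ν) I := by
  intro φ hφ hφ0 hφc hφI
  have hsupp := tsupport_mul_prod_subset φ ψ
  convert hu (fun t x => φ t * ψ x) (by fun_prop) (fun t x => mul_nonneg (hφ0 t) (hψ0 x))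
    ((hφc.isCompact.prod hψc.isCompact).of_isClosed_subset (isClosed_tsupport _) hsupp)
    (hsupp.trans (prod_mono hφI (subset_univ _))) using 3 with t
  rw [← integral_mul_const]
  congr! 2
  rw [deriv_mul_const (hφ.differentiable (by simp) t)]
  ring

theorem IsDistribTimeAntitoneOn.exists_null_antitoneOn_integral_mul [BorelSpace E]
    [SecondCountableTopology E] [SFinite ν] (hI : IsOpen I) (hIc : I.OrdConnected)
    (hu : IsDistribTimeAntitoneOn u I ν)
    (hui : LocallyIntegrableOn (uncurry u) (I ×ˢ univ) (volume.prod ν))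
    (hψ : ContDiff ℝ ∞ ψ) (hψ0 : ∀ x, 0 ≤ ψ x) (hψc : HasCompactSupport ψ) :
    ∃ T, volume T = 0 ∧ (∀ t ∈ I \ T, Integrable (fun x => u t x * ψ x) ν) ∧
      AntitoneOn (fun t => ∫ x, u t x * ψ x ∂ν) (I \ T) := by
  obtain ⟨T, hT, hanti⟩ := (hu.integral_mul hψ hψ0 hψc).exists_null_antitoneOn hI hIc
    (locallyIntegrableOn_integral_mul hI hui hψ.continuous hψc)
  have hae := (ae_restrict_iff' hI.measurableSet).1
    (ae_restrict_integrable_mul hI hui hψ.continuous hψc)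
  refine ⟨T ∪ _, measure_union_null hT hae, fun t ht => ?_,
    hanti.mono (sdiff_subset_sdiff_right subset_union_left)⟩
  exact not_not.1 (fun h => ht.2 (.inr h)) ht.1

end Slices

section RightContinuous

theorem exists_shrinkingBump_rat_support_subset_Ioo {a b : ℝ} (hab : a < b) :
    ∃ (q : ℚ) (n : ℕ), support (shrinkingBump (q : ℝ) n) ⊆ Ioo a b := by
  obtain ⟨n, hn⟩ := exists_nat_one_div_lt (half_pos (sub_pos.2 hab))
  obtain ⟨q, haq, hqb⟩ :=
    exists_rat_btwn (show a + 1 / ((n : ℝ) + 1) < b - 1 / ((n : ℝ) + 1) by linarith)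
  refine ⟨q, n, ?_⟩
  rw [ContDiffBump.support_eq, Real.ball_eq_Ioo]
  exact Ioo_subset_Ioo (lt_sub_iff_add_lt.2 haq).le (lt_sub_iff_add_lt.1 hqb).le

theorem le_of_integral_mul_shrinkingBump_le {v w : ℝ → ℝ}
    (hv : ∀ x, ContinuousWithinAt v (Ici x) x) (hw : ∀ x, ContinuousWithinAt w (Ici x) x)
    (hvi : ∀ (q : ℚ) (n : ℕ), Integrable fun x => v x * shrinkingBump (q : ℝ) n x)
    (hwi : ∀ (q : ℚ) (n : ℕ), Integrable fun x => w x * shrinkingBump (q : ℝ) n x)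
    (hle : ∀ (q : ℚ) (n : ℕ),
      ∫ x, v x * shrinkingBump (q : ℝ) n x ≤ ∫ x, w x * shrinkingBump (q : ℝ) n x) (x : ℝ) :
    v x ≤ w x := by
  by_contra! hlt
  obtain ⟨b, hxb, hsub⟩ := mem_nhdsGE_iff_exists_Ico_subset.1 ((hw x).eventually_lt (hv x) hlt)
  obtain ⟨q, n, hqn⟩ := exists_shrinkingBump_rat_support_subset_Ioo hxb
  refine (hle q n).not_gt (integral_mul_lt_integral_mul (fun _ => ContDiffBump.nonneg _) ?_
    (hwi q n) (hvi q n) fun y hy => hsub (Ioo_subset_Ico_self (hqn hy)))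
  rw [ContDiffBump.support_eq]
  exact (measure_ball_pos volume _ (ContDiffBump.rOut_pos _)).ne'

end RightContinuous

theorem distributional_time_monotonicity_general {u : ℝ → ℝ → ℝ} {I : Set ℝ} (hI : IsOpen I)
    (hIc : I.OrdConnected) (hui : LocallyIntegrableOn (uncurry u) (I ×ˢ univ))
    (hrc : ∀ t ∈ I, ∀ x, ContinuousWithinAt (u t) (Ici x) x)
    (hu : IsDistribTimeAntitoneOn u I volume) :
    ∃ T ⊆ I, volume T = 0 ∧ AntitoneOn u (I \ T) := by
  choose T hT hTi hTanti using fun (q : ℚ) (n : ℕ) =>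
    hu.exists_null_antitoneOn_integral_mul hI hIc hui (shrinkingBump (q : ℝ) n).contDiff
      (fun _ => (shrinkingBump (q : ℝ) n).nonneg) (shrinkingBump (q : ℝ) n).hasCompactSupport
  have hnotMem : ∀ t ∈ I \ ((⋃ q, ⋃ n, T q n) ∩ I), ∀ q n, t ∈ I \ T q n := fun t ht q n =>
    ⟨ht.1, fun h => ht.2 ⟨mem_iUnion₂.2 ⟨q, n, h⟩, ht.1⟩⟩
  refine ⟨(⋃ q, ⋃ n, T q n) ∩ I, inter_subset_right, ?_, fun t₁ h₁ t₂ h₂ h12 x => ?_⟩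
  · exact measure_mono_null inter_subset_left
      (measure_iUnion_null fun q => measure_iUnion_null (hT q))
  · exact le_of_integral_mul_shrinkingBump_le (hrc t₂ h₂.1) (hrc t₁ h₁.1)
      (fun q n => hTi q n t₂ (hnotMem t₂ h₂ q n)) (fun q n => hTi q n t₁ (hnotMem t₁ h₁ q n))
      (fun q n => hTanti q n (hnotMem t₁ h₁ q n) (hnotMem t₂ h₂ q n) h12) x

/-- If `u : (0,∞) × ℝ → [0,1]` is measurable, right-continuous in space, and satisfies
`∂_t u ≤ 0` in the distributional sense on `(0,∞) × ℝ`, then there is a Lebesgue-null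
set `T ⊆ (0,∞)` of times such that `u(t₂,·) ≤ u(t₁,·)` pointwise whenever
`t₁ ≤ t₂` lie in `(0,∞) ∖ T`. -/
theorem distributional_time_monotonicity (u : ℝ → ℝ → ℝ)
    (hmeas : Measurable fun p : Ioi (0:ℝ) × ℝ => u (p.1 : ℝ) p.2)
    (hrange : ∀ t x : ℝ, 0 < t → u t x ∈ Icc (0:ℝ) 1)
    (hrc : ∀ t : ℝ, 0 < t → ∀ x : ℝ, ContinuousWithinAt (u t) (Ici x) x)
    (hdist : ∀ Φ : ℝ → ℝ → ℝ,
      ContDiff ℝ (⊤ : ℕ∞) (fun p : ℝ × ℝ => Φ p.1 p.2) →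
      (∀ t x : ℝ, 0 ≤ Φ t x) →
      HasCompactSupport (fun p : ℝ × ℝ => Φ p.1 p.2) →
      tsupport (fun p : ℝ × ℝ => Φ p.1 p.2) ⊆ Ioi (0:ℝ) ×ˢ (univ : Set ℝ) →
      0 ≤ ∫ t in Ioi (0:ℝ), ∫ x : ℝ, u t x * deriv (fun s => Φ s x) t) :
    ∃ T : Set ℝ, T ⊆ Ioi (0:ℝ) ∧ volume T = 0 ∧
      ∀ t₁ t₂ : ℝ, t₁ ∈ Ioi (0:ℝ) \ T → t₂ ∈ Ioi (0:ℝ) \ T → t₁ ≤ t₂ →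
        ∀ x : ℝ, u t₂ x ≤ u t₁ x := by
  obtain ⟨T, hT, hT0, hanti⟩ := distributional_time_monotonicity_general isOpen_Ioi ordConnected_Ioi
    (locallyIntegrableOn_prod_univ_of_measurable_of_norm_le measurableSet_Ioi hmeas
      fun t ht x => abs_le.2 ⟨by linarith [(hrange t x ht).1], (hrange t x ht).2⟩) hrc hdist
  exact ⟨T, hT, hT0, fun t₁ t₂ h₁ h₂ h12 => hanti h₁ h₂ h12⟩
end

section
/- Under Assumption (C), let u = (u¹,…,u^d) be a probabilistic solution with initial data (u₀¹,…,u₀^d) satisfying u^γ(0,·) = u₀^γ for every γ, and such that t ↦ u(t,·) is continuous in L¹_loc(ℝ)^d. Fix γ ∈ {1,…,d} and suppose u is a renormalised solution in the γ-th coordinate. Then for Lebesgue-almost every v ∈ (0,1), the quantile trajectory t ↦ X_v^γ(t) is Lipschitz continuous and satisfies X_v^γ(t₂) − X_v^γ(t₁) = ∫_{t₁}^{t₂} λ^γ{u}(s, X_v^γ(s)) ds for all 0 ≤ t₁ ≤ t₂. -/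
open MeasureTheory Filter Set

noncomputable section

/-- The velocity function `λ^γ{u}(t,x)` obtained by averaging the `γ`-th coordinate
between the left limit `u^γ(t,x⁻)` and the value `u^γ(t,x)`. -/
def lamBrace {d : ℕ} (lam : Fin d → (Fin d → ℝ) → ℝ)
    (u : Fin d → ℝ → ℝ → ℝ) (γ : Fin d) (t x : ℝ) : ℝ :=
  ∫ θ in (0:ℝ)..1,
    lam γ (Function.update (fun γ' => u γ' t x) γ
      ((1 - θ) * Function.leftLim (u γ t) x + θ * u γ t x))

/-- A test function `φ` of class `C^{1,0}_c`: continuous, compactly supported,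
with continuous time derivative `φt`. -/
def IsTestFun (φ φt : ℝ → ℝ → ℝ) : Prop :=
  Continuous (fun p : ℝ × ℝ => φ p.1 p.2) ∧
    HasCompactSupport (fun p : ℝ × ℝ => φ p.1 p.2) ∧
    Continuous (fun p : ℝ × ℝ => φt p.1 p.2) ∧
    ∀ t x : ℝ, HasDerivAt (fun s => φ s x) (φt t x) t

/-- A probabilistic solution to the diagonal hyperbolic system
`∂_t u^γ + λ^γ(u) ∂_x u^γ = 0` with initial data `u0`. -/
def IsProbSol {d : ℕ} (lam : Fin d → (Fin d → ℝ) → ℝ)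
    (u : Fin d → ℝ → ℝ → ℝ) (u0 : Fin d → ℝ → ℝ) : Prop :=
  (∀ γ : Fin d, Measurable fun p : Ici (0:ℝ) × ℝ => u γ (p.1 : ℝ) p.2) ∧
  (∀ (γ : Fin d) (t : ℝ), 0 ≤ t → IsCDF (u γ t)) ∧
  (∀ γ : Fin d, IsCDF (u0 γ)) ∧
  ∃ μ : Fin d → ℝ → Measure ℝ,
    (∀ (γ : Fin d) (t : ℝ), IsProbabilityMeasure (μ γ t)) ∧
    (∀ (γ : Fin d) (t : ℝ), 0 ≤ t → ∀ x : ℝ, (μ γ t (Iic x)).toReal = u γ t x) ∧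
    ∀ φ φt : Fin d → ℝ → ℝ → ℝ, (∀ γ, IsTestFun (φ γ) (φt γ)) →
      (∑ γ : Fin d, ((∫ t in Ici (0:ℝ), ∫ x : ℝ, φt γ t x * u γ t x) +
          ∫ x : ℝ, φ γ 0 x * u0 γ x))
        = ∑ γ : Fin d,
            ∫ t in Ici (0:ℝ), ∫ x : ℝ, φ γ t x * lamBrace lam u γ t x ∂(μ γ t)

/-- Continuity of `t ↦ u(t,·)` in `L¹_loc(ℝ)^d` on `[0,∞)`. -/
def ContL1loc {d : ℕ} (u : Fin d → ℝ → ℝ → ℝ) : Prop :=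
  ∀ (γ : Fin d) (a b t₀ : ℝ), 0 ≤ t₀ →
    Tendsto (fun t => ∫ x in Icc a b, |u γ t x - u γ t₀ x|)
      (nhdsWithin t₀ (Ici 0)) (nhds 0)

/-- A renormalised solution in the `γ`-th coordinate: the weak formulation holds with
`u^γ` replaced by `β(u^γ)` for every `C¹` increasing `β : [0,1] → ℝ` with
`β(0) = 0`, `β(1) = 1`. -/
def IsRenormalised {d : ℕ} (lam : Fin d → (Fin d → ℝ) → ℝ)
    (u : Fin d → ℝ → ℝ → ℝ) (u0 : Fin d → ℝ → ℝ) (γ : Fin d) : Prop :=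
  ∀ β : ℝ → ℝ, ContDiffOn ℝ 1 β (Icc 0 1) → StrictMonoOn β (Icc 0 1) →
    β 0 = 0 → β 1 = 1 →
    ∀ φ φt : ℝ → ℝ → ℝ, IsTestFun φ φt →
      ∃ ν : ℝ → Measure ℝ,
        (∀ t : ℝ, IsProbabilityMeasure (ν t)) ∧
        (∀ t : ℝ, 0 ≤ t → ∀ x : ℝ, (ν t (Iic x)).toReal = β (u γ t x)) ∧
        (∫ t in Ici (0:ℝ), ∫ x : ℝ, φt t x * β (u γ t x)) +
            (∫ x : ℝ, φ 0 x * β (u0 γ x))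
          = ∫ t in Ici (0:ℝ), ∫ x : ℝ, φ t x * lamBrace lam u γ t x ∂(ν t)

/-!
A distribution function composed with a smooth renormalisation `β` is the distribution function of
the image of the law `β'(v) dv` on `(0, 1)` under the quantile function. Testing the renormalised
equation with `G(t) χ(x)` therefore gives an identity between integrals over the level `v`:
continuity in `L¹_loc` and the du Bois-Reymond lemma in time turn it into
`∫ (∫_{X_v(0)}^{X_v(T)} χ) β'(v) dv = ∫ (∫_0^T χ(X_v(t)) λ{u}(t, X_v(t)) dt) β'(v) dv`.
As `β'` is an arbitrary positive density, the integrands agree for almost every `v`, and `χ → 1`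
yields the equation of characteristics for each fixed `T` and almost every `v`. In particular
`X_v` obeys the Lipschitz bound for almost every `v`, hence for every `v` by left-continuity of
quantiles, and continuity in time upgrades rational times to all times.
-/

namespace IsCDF

variable {F F₁ F₂ : ℝ → ℝ} {v x c : ℝ} {P ν : Measure ℝ}

lemma nonneg (h : IsCDF F) (x : ℝ) : 0 ≤ F x := h.1.le_of_tendsto h.2.2.1 x

lemma le_one (h : IsCDF F) (x : ℝ) : F x ≤ 1 := h.1.ge_of_tendsto h.2.2.2 x

lemma mem_Icc (h : IsCDF F) (x : ℝ) : F x ∈ Icc (0 : ℝ) 1 := ⟨h.nonneg x, h.le_one x⟩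

lemma cdfInv_le_iff (h : IsCDF F) (hv : v ∈ Ioo (0 : ℝ) 1) : cdfInv F v ≤ x ↔ v ≤ F x := by
  obtain ⟨hmono, hright, hbot, htop⟩ := h
  obtain ⟨a, ha⟩ := (hbot.eventually (gt_mem_nhds hv.1)).exists
  have hbdd : BddBelow {x | v ≤ F x} :=
    ⟨a, fun y hy => (hmono.reflect_lt (ha.trans_le hy)).le⟩
  have hne : {x | v ≤ F x}.Nonempty := (htop.eventually (le_mem_nhds hv.2)).exists
  refine ⟨fun hx => ge_of_tendsto ((hright x).mono Ioi_subset_Ici_self) ?_, csInf_le hbdd⟩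
  filter_upwards [self_mem_nhdsWithin] with y (hy : x < y)
  obtain ⟨z, hz, hzy⟩ := exists_lt_of_csInf_lt hne (hx.trans_lt hy)
  exact hz.trans (hmono hzy.le)

lemma monotoneOn_cdfInv (h : IsCDF F) : MonotoneOn (cdfInv F) (Ioo 0 1) := fun _ hv _ hw hvw =>
  (h.cdfInv_le_iff hv).2 (hvw.trans ((h.cdfInv_le_iff hw).1 le_rfl))

/-- Quantiles are left-continuous in the level, so the inequality extends from a dense set. -/
lemma cdfInv_le_cdfInv_add_of_ae (h₁ : IsCDF F₁) (h₂ : IsCDF F₂)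
    (hae : ∀ᵐ w ∂volume.restrict (Ioo (0 : ℝ) 1), cdfInv F₁ w ≤ cdfInv F₂ w + c)
    (hv : v ∈ Ioo (0 : ℝ) 1) : cdfInv F₁ v ≤ cdfInv F₂ v + c := by
  rw [h₁.cdfInv_le_iff hv]
  refine le_of_forall_lt fun y hyv => ?_
  obtain ⟨w, hw, hle⟩ : ∃ w ∈ Ioo (max 0 y) v, cdfInv F₁ w ≤ cdfInv F₂ w + c := by
    have hsub : Ioo (max 0 y) v ⊆ Ioo 0 1 := Ioo_subset_Ioo (le_max_left 0 y) hv.2.le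
    have hpos : volume (Ioo (max 0 y) v) ≠ 0 := by simp [hv.1, hyv]
    have hfreq := (frequently_ae_mem_iff.2 hpos).and_eventually
      ((ae_restrict_iff' measurableSet_Ioo).1 hae)
    exact hfreq.exists.imp fun w ⟨hw, hle⟩ => ⟨hw, hle (hsub hw)⟩
  have hw01 : w ∈ Ioo (0 : ℝ) 1 := ⟨(le_max_left 0 y).trans_lt hw.1, hw.2.trans hv.2⟩
  calc y < w := (le_max_right 0 y).trans_lt hw.1
    _ ≤ F₁ (cdfInv F₂ w + c) := (h₁.cdfInv_le_iff hw01).1 hle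
    _ ≤ F₁ (cdfInv F₂ v + c) := h₁.1 (by gcongr; exact h₂.monotoneOn_cdfInv hw01 hv hw.2.le)

lemma aemeasurable_cdfInv (h : IsCDF F) (hP : ∀ᵐ v ∂P, v ∈ Ioo (0 : ℝ) 1) :
    AEMeasurable (cdfInv F) P := by
  have := aemeasurable_restrict_of_monotoneOn (μ := P) measurableSet_Ioo h.monotoneOn_cdfInv
  rwa [Measure.restrict_eq_self_of_ae_mem hP] at this

lemma map_cdfInv_real_Iic (h : IsCDF F) (hP : ∀ᵐ v ∂P, v ∈ Ioo (0 : ℝ) 1) (x : ℝ) :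
    (P.map (cdfInv F)).real (Iic x) = P.real (Iic (F x)) := by
  have hpre : cdfInv F ⁻¹' Iic x =ᵐ[P] Iic (F x) := by
    filter_upwards [hP] with v hv
    exact propext (h.cdfInv_le_iff hv)
  rw [map_measureReal_apply_of_aemeasurable (h.aemeasurable_cdfInv hP) measurableSet_Iic,
    measureReal_congr hpre]

lemma map_cdfInv [IsFiniteMeasure P] [IsFiniteMeasure ν] (h : IsCDF F)
    (hP : ∀ᵐ v ∂P, v ∈ Ioo (0 : ℝ) 1) (hν : ∀ x, ν.real (Iic x) = P.real (Iic (F x))) :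
    P.map (cdfInv F) = ν :=
  Measure.ext_of_Iic _ _ fun x => by
    rw [← measureReal_eq_measureReal_iff, h.map_cdfInv_real_Iic hP, hν]

end IsCDF

lemma measurable_indicator_cdfInv {α : Type*} [MeasurableSpace α] {F : α → ℝ → ℝ}
    (hF : Measurable fun z : α × ℝ => F z.1 z.2) (hcdf : ∀ a, IsCDF (F a)) :
    Measurable fun z : α × ℝ => (Ioo (0 : ℝ) 1).indicator (cdfInv (F z.1)) z.2 := by
  refine measurable_of_Iic fun x => ?_
  have hpre : (fun z : α × ℝ => (Ioo (0 : ℝ) 1).indicator (cdfInv (F z.1)) z.2) ⁻¹' Iic x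
      = {z | z.2 ∈ Ioo (0 : ℝ) 1 ∧ z.2 ≤ F z.1 x} ∪ {z | z.2 ∉ Ioo (0 : ℝ) 1 ∧ 0 ≤ x} := by
    ext ⟨a, v⟩
    by_cases hv : v ∈ Ioo (0 : ℝ) 1 <;>
      simp only [mem_preimage, mem_Iic, mem_union, mem_ofPred_eq, hv, indicator_of_mem,
        indicator_of_notMem, (hcdf a).cdfInv_le_iff, not_true_eq_false, not_false_eq_true,
        false_and, true_and, or_false, false_or]
  have hIoo : MeasurableSet {z : α × ℝ | z.2 ∈ Ioo (0 : ℝ) 1} := measurable_snd measurableSet_Ioo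
  have hFx : Measurable fun z : α × ℝ => F z.1 x :=
    hF.comp (measurable_fst.prodMk measurable_const)
  rw [hpre]
  exact (hIoo.inter (measurableSet_le measurable_snd hFx)).union (hIoo.compl.inter (.const _))

lemma aemeasurable_cdfInv_prod {α : Type*} [MeasurableSpace α] {F : α → ℝ → ℝ} {μ : Measure α}
    {P : Measure ℝ} (hF : Measurable fun z : α × ℝ => F z.1 z.2)
    (hcdf : ∀ a, IsCDF (F a)) (hP : ∀ᵐ v ∂P, v ∈ Ioo (0 : ℝ) 1) :
    AEMeasurable (fun z : α × ℝ => cdfInv (F z.1) z.2) (μ.prod P) := by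
  refine ⟨_, measurable_indicator_cdfInv hF hcdf, ?_⟩
  filter_upwards [Measure.quasiMeasurePreserving_snd.ae hP] with z hz
  rw [indicator_of_mem hz]

lemma measurable_cdfInv_left {α : Type*} [MeasurableSpace α] {F : α → ℝ → ℝ} {v : ℝ}
    (hF : Measurable fun z : α × ℝ => F z.1 z.2) (hcdf : ∀ a, IsCDF (F a))
    (hv : v ∈ Ioo (0 : ℝ) 1) : Measurable fun a => cdfInv (F a) v := by
  have := (measurable_indicator_cdfInv hF hcdf).comp (measurable_prodMk_right (y := v))
  simpa only [Function.comp_def, indicator_of_mem hv] using this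

section Calculus

variable {a b g k χ : ℝ → ℝ} {c : ℝ} {ν : Measure ℝ}

lemma integral_mul_measureReal_Iic [IsFiniteMeasure ν] (hχ : Integrable χ) :
    ∫ x, χ x * ν.real (Iic x) = ∫ y, (∫ x in Ici y, χ x) ∂ν := by
  have hS : MeasurableSet {z : ℝ × ℝ | z.2 ≤ z.1} := measurableSet_le measurable_snd measurable_fst
  have hint : Integrable ({z : ℝ × ℝ | z.2 ≤ z.1}.indicator fun z => χ z.1) (volume.prod ν) :=
    (hχ.comp_fst ν).indicator hS
  calc ∫ x, χ x * ν.real (Iic x)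
      = ∫ x, ∫ y, {z : ℝ × ℝ | z.2 ≤ z.1}.indicator (fun z => χ z.1) (x, y) ∂ν := by
        congr! with x
        rw [mul_comm, ← smul_eq_mul, ← setIntegral_const, ← integral_indicator measurableSet_Iic]
        rfl
    _ = ∫ y, ∫ x, {z : ℝ × ℝ | z.2 ≤ z.1}.indicator (fun z => χ z.1) (x, y) ∂volume ∂ν :=
        integral_integral_swap (f := fun x y => indicator _ _ (x, y)) hint
    _ = ∫ y, (∫ x in Ici y, χ x) ∂ν := by
        congr with y
        rw [← integral_indicator measurableSet_Ici]
        rfl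

lemma hasDerivAt_integral_Iic (hk : Continuous k) (hki : Integrable k) (t : ℝ) :
    HasDerivAt (fun t => ∫ s in Iic t, k s) (k t) t := by
  have hsplit : (fun t => ∫ s in Iic t, k s)
      = fun t => (∫ s in Iic 0, k s) + ∫ s in (0 : ℝ)..t, k s := by
    funext t
    rw [← intervalIntegral.integral_Iic_sub_Iic hki.integrableOn hki.integrableOn]
    ring
  rw [hsplit]
  exact (hk.integral_hasStrictDerivAt 0 t).hasDerivAt.const_add _

lemma hasCompactSupport_integral_Iic (hk : Continuous k) (hkc : HasCompactSupport k)
    (hk0 : ∫ s, k s = 0) : HasCompactSupport fun t => ∫ s in Iic t, k s := by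
  obtain ⟨R, hR⟩ := hkc.isCompact.isBounded.subset_closedBall 0
  have hvanish : ∀ s, R < |s| → k s = 0 := fun s hs =>
    image_eq_zero_of_notMem_tsupport fun hmem => hs.not_ge (by simpa using hR hmem)
  refine HasCompactSupport.intro (isCompact_Icc (a := -R) (b := R)) fun t ht => ?_
  obtain htR | htR : t < -R ∨ R < t := by simpa [or_iff_not_imp_left] using ht
  · exact setIntegral_eq_zero_of_forall_eq_zero fun s hs =>
      hvanish s (lt_abs.2 (.inr (by linarith [mem_Iic.1 hs])))
  · have htail : ∫ s in Ioi t, k s = 0 := setIntegral_eq_zero_of_forall_eq_zero fun s hs =>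
      hvanish s (lt_abs.2 (.inl (htR.trans hs)))
    have hki : Integrable k := hk.integrable_of_hasCompactSupport hkc
    have hadd := intervalIntegral.integral_Iic_add_Ioi (b := t) hki.integrableOn hki.integrableOn
    rwa [hk0, htail, add_zero] at hadd

/-- The mean of `g` is removed with a bump located in the past of `c`. -/
lemma exists_contDiff_hasCompactSupport_deriv_eqOn_Ici (hg : Continuous g)
    (hgc : HasCompactSupport g) (c : ℝ) :
    ∃ G : ℝ → ℝ, ContDiff ℝ 1 G ∧ HasCompactSupport G ∧ EqOn (deriv G) g (Ici c) := by
  let ρ : ContDiffBump (c - 2) := ⟨1 / 2, 1, by norm_num, by norm_num⟩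
  let k : ℝ → ℝ := fun s => g s - (∫ r, g r) * ρ.normed volume s
  have hk : Continuous k := hg.sub (continuous_const.mul ρ.continuous_normed)
  have hkc : HasCompactSupport k := hgc.sub ρ.hasCompactSupport_normed.mul_left
  have hk0 : ∫ s, k s = 0 := by
    rw [integral_sub (hg.integrable_of_hasCompactSupport hgc) (ρ.integrable_normed.const_mul _),
      integral_const_mul, ρ.integral_normed, mul_one, sub_self]
  have hderiv := hasDerivAt_integral_Iic hk (hk.integrable_of_hasCompactSupport hkc)
  have hderiv_eq : deriv (fun t => ∫ s in Iic t, k s) = k := funext fun t => (hderiv t).deriv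
  refine ⟨fun t => ∫ s in Iic t, k s,
    contDiff_one_iff_deriv.2 ⟨fun t => (hderiv t).differentiableAt, by rwa [hderiv_eq]⟩,
    hasCompactSupport_integral_Iic hk hkc hk0, fun t ht => ?_⟩
  have hρ : ρ.normed volume t = 0 := by
    rw [← Function.notMem_support, ρ.support_normed_eq, Metric.mem_ball, Real.dist_eq, not_lt]
    exact le_abs.2 (.inl (by dsimp only [ρ]; linarith [mem_Ici.1 ht]))
  simp only [hderiv_eq, k, hρ, mul_zero, sub_zero]

lemma exists_forall_integral_Ioi_eq_intervalIntegral {K : Set ℝ} (hK : IsCompact K) (c : ℝ) :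
    ∃ r ∉ K, ∀ f : ℝ → ℝ, (∀ t ∉ K, f t = 0) → ∫ t in Ioi c, f t = ∫ t in c..r, f t := by
  obtain ⟨M, hM⟩ := hK.bddAbove
  have hnotMem : ∀ t, max c M < t → t ∉ K := fun t ht hmem =>
    ((le_max_right c M).trans_lt ht).not_ge (hM hmem)
  refine ⟨max c M + 1, hnotMem _ (lt_add_one _), fun f hf => ?_⟩
  rw [intervalIntegral.integral_of_le ((le_max_left c M).trans (lt_add_one _).le)]
  exact setIntegral_eq_of_subset_of_forall_sdiff_eq_zero measurableSet_Ioi Ioc_subset_Ioi_self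
    fun t ht => hf t <| hnotMem t <| (lt_add_one _).trans <| not_le.1 fun hle => ht.2 ⟨ht.1, hle⟩

lemma intervalIntegrable_of_locallyIntegrable (hb : LocallyIntegrable b) (c r : ℝ) :
    IntervalIntegrable b volume c r :=
  (hb.integrableOn_isCompact isCompact_uIcc).intervalIntegrable

lemma integral_Ioi_mul_eq_neg_integral_deriv_mul (hg : ContDiff ℝ 1 g)
    (hgc : HasCompactSupport g) (hb : LocallyIntegrable b) (c : ℝ) :
    ∫ t in Ioi c, g t * b t = -∫ t in Ioi c, deriv g t * ∫ s in c..t, b s := by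
  obtain ⟨r, hr, hIoi⟩ := exists_forall_integral_Ioi_eq_intervalIntegral hgc.isCompact c
  let B : ℝ → ℝ := fun t => ∫ s in c..t, b s
  have hBb : ∫ t in c..r, g t * b t = ∫ t in c..r, g t * deriv B t :=
    intervalIntegral.integral_congr_ae <|
      (LocallyIntegrable.ae_hasDerivAt_integral hb).mono fun t ht _ => by rw [(ht c).deriv]
  have hg_ac : AbsolutelyContinuousOnInterval g c r :=
    hg.contDiffOn.absolutelyContinuousOnInterval
  have hB_ac : AbsolutelyContinuousOnInterval B c r :=
    (intervalIntegrable_of_locallyIntegrable hb c r).absolutelyContinuousOnInterval_intervalIntegral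
      left_mem_uIcc
  rw [hIoi _ fun t ht => by rw [image_eq_zero_of_notMem_tsupport ht, zero_mul],
    hIoi _ fun t ht => by
      rw [image_eq_zero_of_notMem_tsupport (notMem_subset tsupport_deriv_subset ht), zero_mul],
    hBb, hg_ac.integral_mul_deriv_eq_deriv_mul hB_ac, image_eq_zero_of_notMem_tsupport hr,
    show B c = 0 from intervalIntegral.integral_same]
  ring

lemma eqOn_zero_Ici_of_forall_integral_contDiff_mul {w : ℝ → ℝ} (hw : Continuous w)
    (h : ∀ g : ℝ → ℝ, Continuous g → HasCompactSupport g → ∫ t in Ioi c, g t * w t = 0) :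
    EqOn w 0 (Ici c) := by
  have hae : ∀ᵐ t, t ∈ Ioi c → w t = 0 :=
    isOpen_Ioi.ae_eq_zero_of_integral_contDiff_smul_eq_zero
      (hw.locallyIntegrable.locallyIntegrableOn _) fun g hg hgc hgU => by
        rw [← h g hg.continuous hgc]
        refine (setIntegral_eq_integral_of_forall_compl_eq_zero fun t ht => ?_).symm
        rw [image_eq_zero_of_notMem_tsupport (notMem_subset hgU ht), zero_smul]
  have hae_Ici : w =ᵐ[volume.restrict (Ici c)] 0 := by
    rw [← restrict_Ioi_eq_restrict_Ici]
    exact (ae_restrict_iff' measurableSet_Ioi).2 hae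
  exact Measure.eqOn_of_ae_eq hae_Ici hw.continuousOn continuousOn_const
    (by rw [interior_Ici, closure_Ioi])

/-- The du Bois-Reymond lemma on a half-line: the test functions see the endpoint. -/
theorem sub_eq_neg_intervalIntegral_of_forall_integral_deriv_mul (ha : Continuous a)
    (hb : LocallyIntegrable b)
    (hweak : ∀ G : ℝ → ℝ, ContDiff ℝ 1 G → HasCompactSupport G →
      (∫ t in Ioi c, deriv G t * a t) + G c * a c = ∫ t in Ioi c, G t * b t)
    {T : ℝ} (hT : c ≤ T) : a T - a c = -∫ t in c..T, b t := by
  let B : ℝ → ℝ := fun t => ∫ s in c..t, b s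
  have hB : Continuous B :=
    intervalIntegral.continuous_primitive (intervalIntegrable_of_locallyIntegrable hb) c
  have horth : ∀ g : ℝ → ℝ, Continuous g → HasCompactSupport g →
      ∫ t in Ioi c, g t * (a t + B t - a c) = 0 := by
    intro g hg hgc
    obtain ⟨G, hG, hGc, hGg⟩ := exists_contDiff_hasCompactSupport_deriv_eqOn_Ici hg hgc c
    have hint : ∀ f : ℝ → ℝ, Continuous f → IntegrableOn (fun t => deriv G t * f t) (Ioi c) :=
      fun f hf => (((hG.continuous_deriv le_rfl).mul hf).integrable_of_hasCompactSupport
        hGc.deriv.mul_right).integrableOn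
    have hsub : IntegrableOn (fun t => deriv G t * a t - deriv G t * a c) (Ioi c) :=
      (hint a ha).sub (hint _ continuous_const)
    calc ∫ t in Ioi c, g t * (a t + B t - a c)
        = ∫ t in Ioi c, (deriv G t * a t - deriv G t * a c) + deriv G t * B t := by
          refine setIntegral_congr_fun measurableSet_Ioi fun t ht => ?_
          simp only [hGg (Ioi_subset_Ici_self ht)]
          ring
      _ = (∫ t in Ioi c, deriv G t * a t) + G c * a c + ∫ t in Ioi c, deriv G t * B t := by
          rw [integral_add hsub (hint B hB), integral_sub (hint a ha) (hint _ continuous_const),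
            integral_mul_const, hGc.integral_Ioi_deriv_eq hG, neg_mul, sub_neg_eq_add]
      _ = 0 := by
          rw [hweak G hG hGc, integral_Ioi_mul_eq_neg_integral_deriv_mul hG hGc hb c,
            neg_add_cancel]
  have hzero : a T + B T - a c = 0 :=
    eqOn_zero_Ici_of_forall_integral_contDiff_mul ((ha.add hB).sub continuous_const) horth hT
  linarith

end Calculus

section LocalL1

variable {ι : Type*} {l : Filter ι} {h : ι → ℝ → ℝ} {h₀ χ β : ℝ → ℝ} {s : Set ℝ} {K : NNReal}

lemma tendsto_integral_mul_of_tendsto_integral_Icc_abs_sub (hχ : Continuous χ)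
    (hχc : HasCompactSupport χ) (hint : ∀ i, LocallyIntegrable (h i))
    (hint₀ : LocallyIntegrable h₀)
    (hlim : ∀ a b, Tendsto (fun i => ∫ x in Icc a b, |h i x - h₀ x|) l (nhds 0)) :
    Tendsto (fun i => ∫ x, χ x * h i x) l (nhds (∫ x, χ x * h₀ x)) := by
  obtain ⟨C, hC⟩ := hχc.exists_bound_of_continuous hχ
  obtain ⟨R, hR⟩ := hχc.isCompact.isBounded.subset_closedBall 0
  rw [Real.closedBall_eq_Icc] at hR
  have hχh : ∀ {f : ℝ → ℝ}, LocallyIntegrable f → Integrable fun x => χ x * f x :=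
    fun hf => hf.integrable_smul_left_of_hasCompactSupport hχ hχc
  refine tendsto_iff_norm_sub_tendsto_zero.2 (squeeze_zero (fun _ => norm_nonneg _) (fun i => ?_)
    (by simpa only [mul_zero] using (hlim (0 - R) (0 + R)).const_mul C))
  have hdiff : IntegrableOn (fun x => |h i x - h₀ x|) (Icc (0 - R) (0 + R)) :=
    (((hint i).sub hint₀).integrableOn_isCompact isCompact_Icc).abs
  calc ‖(∫ x, χ x * h i x) - ∫ x, χ x * h₀ x‖
      = ‖∫ x in Icc (0 - R) (0 + R), χ x * (h i x - h₀ x)‖ := by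
        rw [← integral_sub (hχh (hint i)) (hχh hint₀),
          setIntegral_eq_integral_of_forall_compl_eq_zero fun x hx => by
            rw [image_eq_zero_of_notMem_tsupport (notMem_subset hR hx), zero_mul]]
        simp only [mul_sub]
    _ ≤ ∫ x in Icc (0 - R) (0 + R), C * |h i x - h₀ x| := by
        refine norm_integral_le_of_norm_le (hdiff.const_mul C) (.of_forall fun x => ?_)
        rw [norm_mul, Real.norm_eq_abs (h i x - h₀ x)]
        gcongr
        exact hC x
    _ = C * ∫ x in Icc (0 - R) (0 + R), |h i x - h₀ x| := integral_const_mul _ _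

lemma tendsto_integral_Icc_abs_sub_comp (hβ : LipschitzOnWith K β s) (hs : ∀ i x, h i x ∈ s)
    (hs₀ : ∀ x, h₀ x ∈ s) (hint : ∀ i, LocallyIntegrable (h i)) (hint₀ : LocallyIntegrable h₀)
    {a b : ℝ} (hlim : Tendsto (fun i => ∫ x in Icc a b, |h i x - h₀ x|) l (nhds 0)) :
    Tendsto (fun i => ∫ x in Icc a b, |β (h i x) - β (h₀ x)|) l (nhds 0) := by
  refine squeeze_zero (fun i => integral_nonneg fun x => abs_nonneg _) (fun i => ?_)
    (by simpa only [mul_zero] using hlim.const_mul (K : ℝ))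
  rw [← integral_const_mul]
  refine integral_mono_of_nonneg (.of_forall fun x => abs_nonneg _)
    ((((hint i).sub hint₀).integrableOn_isCompact isCompact_Icc).abs.const_mul _)
    (.of_forall fun x => ?_)
  simpa only [Real.dist_eq] using hβ.dist_le_mul _ (hs i x) _ (hs₀ x)

lemma continuous_integral_mul_measureReal_Iic {α : Type*} [TopologicalSpace α] {F : α → ℝ → ℝ}
    {P : Measure ℝ} [IsFiniteMeasure P] (hcdf : ∀ t, IsCDF (F t))
    (hL1 : ∀ a b t₀, Tendsto (fun t => ∫ x in Icc a b, |F t x - F t₀ x|) (nhds t₀) (nhds 0))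
    (hP : LipschitzOnWith K (fun y => P.real (Iic y)) (Icc 0 1)) (hχ : Continuous χ)
    (hχc : HasCompactSupport χ) : Continuous fun t => ∫ x, χ x * P.real (Iic (F t x)) := by
  have hP_mono : Monotone fun y => P.real (Iic y) := fun _ _ hxy =>
    measureReal_mono (Iic_subset_Iic.2 hxy)
  refine continuous_iff_continuousAt.2 fun t₀ =>
    tendsto_integral_mul_of_tendsto_integral_Icc_abs_sub hχ hχc
      (fun t => (hP_mono.comp (hcdf t).1).locallyIntegrable)
      (hP_mono.comp (hcdf t₀).1).locallyIntegrable fun a b => ?_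
  exact tendsto_integral_Icc_abs_sub_comp hP (fun t => (hcdf t).mem_Icc) (hcdf t₀).mem_Icc
    (fun t => (hcdf t).1.locallyIntegrable) (hcdf t₀).1.locallyIntegrable (hL1 a b t₀)

end LocalL1

/-- A continuous positive probability density on `(0, 1)`, standing for the derivative of an
admissible renormalisation. Continuity and positivity are required on all of `ℝ` for convenience;
only the values on `[0, 1]` matter. -/
structure IsUnitDensity (p : ℝ → ℝ) : Prop where
  continuous : Continuous p
  pos : ∀ x, 0 < p x
  integral_eq_one : ∫ x in (0 : ℝ)..1, p x = 1

/-- The measure on `(0, 1)` with density `p`. -/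
def unitLaw (p : ℝ → ℝ) : Measure ℝ :=
  (volume.restrict (Ioo 0 1)).withDensity fun v => ENNReal.ofReal (p v)

lemma ae_unitLaw_mem_Ioo (p : ℝ → ℝ) : ∀ᵐ v ∂unitLaw p, v ∈ Ioo (0 : ℝ) 1 :=
  (withDensity_absolutelyContinuous _ _).ae_le (ae_restrict_mem measurableSet_Ioo)

namespace IsUnitDensity

variable {p : ℝ → ℝ}

lemma integral_unitLaw (hp : IsUnitDensity p) (f : ℝ → ℝ) :
    ∫ v, f v ∂unitLaw p = ∫ v in Ioo (0 : ℝ) 1, p v * f v := by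
  rw [unitLaw, integral_withDensity_eq_integral_toReal_smul
    hp.continuous.measurable.ennreal_ofReal (.of_forall fun v => ENNReal.ofReal_lt_top)]
  simp only [ENNReal.toReal_ofReal (hp.pos _).le, smul_eq_mul]

lemma real_unitLaw (hp : IsUnitDensity p) {s : Set ℝ} (hs : MeasurableSet s) :
    (unitLaw p).real s = ∫ v in Ioo 0 1 ∩ s, p v := by
  rw [← integral_indicator_one hs, hp.integral_unitLaw, ← setIntegral_indicator hs]
  congr with v
  by_cases hv : v ∈ s <;> simp [hv]

lemma isProbabilityMeasure_unitLaw (hp : IsUnitDensity p) : IsProbabilityMeasure (unitLaw p) := by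
  rw [isProbabilityMeasure_iff_real, hp.real_unitLaw .univ, inter_univ,
    ← integral_Ioc_eq_integral_Ioo, ← intervalIntegral.integral_of_le zero_le_one,
    hp.integral_eq_one]

lemma real_unitLaw_Iic (hp : IsUnitDensity p) {y : ℝ} (hy : y ∈ Icc (0 : ℝ) 1) :
    (unitLaw p).real (Iic y) = ∫ v in (0 : ℝ)..y, p v := by
  have hae : (Ioo 0 1 ∩ Iic y : Set ℝ) =ᵐ[volume] (Ioc 0 1 ∩ Iic y : Set ℝ) :=
    Ioo_ae_eq_Ioc.inter (ae_eq_refl _)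
  rw [hp.real_unitLaw measurableSet_Iic, intervalIntegral.integral_of_le hy.1,
    setIntegral_congr_set hae, Ioc_inter_Iic, min_eq_right hy.2]

lemma lipschitzOnWith_real_unitLaw_Iic (hp : IsUnitDensity p) :
    ∃ K : NNReal, LipschitzOnWith K (fun y => (unitLaw p).real (Iic y)) (Icc 0 1) := by
  obtain ⟨C, hC⟩ := (isCompact_Icc (a := (0 : ℝ)) (b := 1)).exists_bound_of_continuousOn
    hp.continuous.continuousOn
  refine ⟨C.toNNReal, LipschitzOnWith.of_dist_le_mul fun x hx y hy => ?_⟩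
  have hsub : uIoc y x ⊆ Icc 0 1 := uIoc_subset_uIcc.trans (uIcc_subset_Icc hy hx)
  rw [hp.real_unitLaw_Iic hx, hp.real_unitLaw_Iic hy, Real.dist_eq, Real.dist_eq,
    intervalIntegral.integral_interval_sub_left (hp.continuous.intervalIntegrable _ _)
      (hp.continuous.intervalIntegrable _ _)]
  refine intervalIntegral.norm_integral_le_of_norm_le_const (f := p) fun v hv => ?_
  exact (hC v (hsub hv)).trans (Real.le_coe_toNNReal C)

lemma div_integral {q : ℝ → ℝ} (hq : Continuous q) (hpos : ∀ x, 0 < q x) :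
    IsUnitDensity fun x => q x / ∫ y in (0 : ℝ)..1, q y := by
  have hI : 0 < ∫ y in (0 : ℝ)..1, q y :=
    intervalIntegral.intervalIntegral_pos_of_pos (hq.intervalIntegrable _ _) hpos zero_lt_one
  exact ⟨hq.div_const _, fun x => div_pos (hpos x) hI, by
    rw [intervalIntegral.integral_div, div_self hI.ne']⟩

lemma contDiff_primitive (hp : IsUnitDensity p) : ContDiff ℝ 1 fun y => ∫ v in (0 : ℝ)..y, p v := by
  have hderiv : deriv (fun y => ∫ v in (0 : ℝ)..y, p v) = p :=
    funext fun y => hp.continuous.deriv_integral p 0 y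
  refine contDiff_one_iff_deriv.2 ⟨fun y => ?_, hderiv.symm ▸ hp.continuous⟩
  exact (hp.continuous.integral_hasStrictDerivAt 0 y).hasDerivAt.differentiableAt

lemma strictMono_primitive (hp : IsUnitDensity p) :
    StrictMono fun y => ∫ v in (0 : ℝ)..y, p v :=
  strictMono_of_deriv_pos fun y => (hp.continuous.deriv_integral p 0 y).symm ▸ hp.pos y

end IsUnitDensity

theorem ae_eq_zero_of_forall_integral_unitLaw_eq_zero {W : ℝ → ℝ}
    (hW : IntegrableOn W (Ioo 0 1)) (h : ∀ p, IsUnitDensity p → ∫ v, W v ∂unitLaw p = 0) :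
    ∀ᵐ v ∂volume.restrict (Ioo (0 : ℝ) 1), W v = 0 := by
  have hpos : ∀ q : ℝ → ℝ, Continuous q → (∀ x, 0 < q x) → ∫ v in Ioo 0 1, q v * W v = 0 := by
    intro q hq hq0
    have hp := IsUnitDensity.div_integral hq hq0
    have hI : (∫ y in (0 : ℝ)..1, q y) ≠ 0 := fun hI => by simpa [hI] using hp.pos 0
    have hzero := h _ hp
    simp only [hp.integral_unitLaw, div_mul_eq_mul_div, integral_div] at hzero
    exact (div_eq_zero_iff.1 hzero).resolve_right hI
  refine (ae_restrict_iff' measurableSet_Ioo).2 <|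
    isOpen_Ioo.ae_eq_zero_of_integral_contDiff_smul_eq_zero hW.locallyIntegrableOn
      fun g hg hgc hgU => ?_
  obtain ⟨D, hD⟩ := hgc.exists_bound_of_continuous hg.continuous
  have hD0 : 0 ≤ D := (norm_nonneg _).trans (hD 0)
  have hgW : IntegrableOn (fun v => g v * W v) (Ioo 0 1) :=
    hW.bdd_mul hg.continuous.aestronglyMeasurable (.of_forall hD)
  have hshift := hpos (fun v => g v + (D + 1)) (by fun_prop) fun v => by
    linarith [neg_le_of_abs_le (hD v)]
  have hconst := hpos (fun _ => D + 1) continuous_const fun _ => by linarith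
  simp only [add_mul _ (D + 1), integral_add hgW (hW.const_mul (D + 1)), hconst, add_zero] at hshift
  rw [← hshift, ← setIntegral_eq_integral_of_forall_compl_eq_zero fun v hv => by
    rw [image_eq_zero_of_notMem_tsupport (notMem_subset hgU hv), zero_smul]]
  rfl

section QuantileIntegrals

variable {F g : ℝ → ℝ → ℝ} {P : Measure ℝ} [IsFiniteMeasure P] {C : ℝ} {χ : ℝ → ℝ}

lemma integrable_comp_cdfInv (hF : Measurable fun z : ℝ × ℝ => F z.1 z.2)
    (hcdf : ∀ t, IsCDF (F t)) (hg : Measurable fun z : ℝ × ℝ => g z.1 z.2)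
    (hgC : ∀ t x, ‖g t x‖ ≤ C) (hP : ∀ᵐ v ∂P, v ∈ Ioo (0 : ℝ) 1) (μ : Measure ℝ)
    [IsFiniteMeasure μ] : Integrable (fun z => g z.1 (cdfInv (F z.1) z.2)) (μ.prod P) :=
  have hX : AEMeasurable (fun z : ℝ × ℝ => (z.1, cdfInv (F z.1) z.2)) (μ.prod P) :=
    measurable_fst.aemeasurable.prodMk (aemeasurable_cdfInv_prod hF hcdf hP)
  .of_bound (hg.comp_aemeasurable hX).aestronglyMeasurable C (.of_forall fun _ => hgC _ _)

lemma locallyIntegrable_integral_comp_cdfInv (hF : Measurable fun z : ℝ × ℝ => F z.1 z.2)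
    (hcdf : ∀ t, IsCDF (F t)) (hg : Measurable fun z : ℝ × ℝ => g z.1 z.2)
    (hgC : ∀ t x, ‖g t x‖ ≤ C) (hP : ∀ᵐ v ∂P, v ∈ Ioo (0 : ℝ) 1) :
    LocallyIntegrable fun t => ∫ v, g t (cdfInv (F t) v) ∂P := by
  refine locallyIntegrable_iff.2 fun k hk => ?_
  have : IsFiniteMeasure (volume.restrict k) := isFiniteMeasure_restrict.2 hk.measure_ne_top
  exact (integrable_comp_cdfInv hF hcdf hg hgC hP (volume.restrict k)).integral_prod_left

lemma integrable_intervalIntegral_comp_cdfInv (hF : Measurable fun z : ℝ × ℝ => F z.1 z.2)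
    (hcdf : ∀ t, IsCDF (F t)) (hg : Measurable fun z : ℝ × ℝ => g z.1 z.2)
    (hgC : ∀ t x, ‖g t x‖ ≤ C) (hP : ∀ᵐ v ∂P, v ∈ Ioo (0 : ℝ) 1) {a b : ℝ} (hab : a ≤ b) :
    Integrable (fun v => ∫ t in a..b, g t (cdfInv (F t) v)) P := by
  simp only [intervalIntegral.integral_of_le hab]
  exact (integrable_comp_cdfInv hF hcdf hg hgC hP (volume.restrict (Ioc a b))).integral_prod_right

lemma intervalIntegral_integral_comp_cdfInv_swap (hF : Measurable fun z : ℝ × ℝ => F z.1 z.2)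
    (hcdf : ∀ t, IsCDF (F t)) (hg : Measurable fun z : ℝ × ℝ => g z.1 z.2)
    (hgC : ∀ t x, ‖g t x‖ ≤ C) (hP : ∀ᵐ v ∂P, v ∈ Ioo (0 : ℝ) 1) {a b : ℝ} (hab : a ≤ b) :
    ∫ t in a..b, ∫ v, g t (cdfInv (F t) v) ∂P
      = ∫ v, (∫ t in a..b, g t (cdfInv (F t) v)) ∂P := by
  simp only [intervalIntegral.integral_of_le hab]
  exact integral_integral_swap
    (integrable_comp_cdfInv hF hcdf hg hgC hP (volume.restrict (Ioc a b)))

variable {F₁ F₂ : ℝ → ℝ}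

lemma intervalIntegral_cdfInv_eq_sub (hχ : Integrable χ) (v : ℝ) :
    ∫ x in cdfInv F₁ v..cdfInv F₂ v, χ x
      = (∫ x in Ici (cdfInv F₁ v), χ x) - ∫ x in Ici (cdfInv F₂ v), χ x :=
  (intervalIntegral.integral_Ici_sub_Ici' hχ.integrableOn hχ.integrableOn).symm

lemma continuous_integral_Ici (hχ : Integrable χ) : Continuous fun y => ∫ x in Ici y, χ x := by
  have htail : (fun y => ∫ x in Ici y, χ x)
      = fun y => (∫ x in Ici 0, χ x) - ∫ x in (0 : ℝ)..y, χ x := funext fun y => by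
    rw [← intervalIntegral.integral_Ici_sub_Ici' hχ.integrableOn hχ.integrableOn, sub_sub_cancel]
  rw [htail]
  exact continuous_const.sub
    (intervalIntegral.continuous_primitive (fun _ _ => hχ.intervalIntegrable) 0)

lemma integrable_integral_Ici_cdfInv (h₁ : IsCDF F₁) (hP : ∀ᵐ v ∂P, v ∈ Ioo (0 : ℝ) 1)
    (hχ : Integrable χ) : Integrable (fun v => ∫ x in Ici (cdfInv F₁ v), χ x) P := by
  refine .of_bound ((continuous_integral_Ici hχ).measurable.comp_aemeasurable
    (h₁.aemeasurable_cdfInv hP)).aestronglyMeasurable (∫ x, ‖χ x‖) (.of_forall fun v => ?_)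
  exact (norm_integral_le_integral_norm _).trans
    (setIntegral_le_integral hχ.norm (.of_forall fun x => norm_nonneg _))

lemma integrable_intervalIntegral_cdfInv (h₁ : IsCDF F₁) (h₂ : IsCDF F₂)
    (hP : ∀ᵐ v ∂P, v ∈ Ioo (0 : ℝ) 1) (hχ : Integrable χ) :
    Integrable (fun v => ∫ x in cdfInv F₁ v..cdfInv F₂ v, χ x) P := by
  simp only [intervalIntegral_cdfInv_eq_sub hχ]
  exact (integrable_integral_Ici_cdfInv h₁ hP hχ).sub (integrable_integral_Ici_cdfInv h₂ hP hχ)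

lemma integral_mul_measureReal_Iic_comp (h₁ : IsCDF F₁) (hP : ∀ᵐ v ∂P, v ∈ Ioo (0 : ℝ) 1)
    (hχ : Integrable χ) :
    ∫ x, χ x * P.real (Iic (F₁ x)) = ∫ v, (∫ x in Ici (cdfInv F₁ v), χ x) ∂P := by
  simp only [← h₁.map_cdfInv_real_Iic hP]
  rw [integral_mul_measureReal_Iic hχ, integral_map (h₁.aemeasurable_cdfInv hP)
    (continuous_integral_Ici hχ).aestronglyMeasurable]

lemma integral_mul_measureReal_Iic_comp_sub (h₁ : IsCDF F₁) (h₂ : IsCDF F₂)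
    (hP : ∀ᵐ v ∂P, v ∈ Ioo (0 : ℝ) 1) (hχ : Integrable χ) :
    (∫ x, χ x * P.real (Iic (F₁ x))) - ∫ x, χ x * P.real (Iic (F₂ x))
      = ∫ v, (∫ x in cdfInv F₁ v..cdfInv F₂ v, χ x) ∂P := by
  rw [integral_mul_measureReal_Iic_comp h₁ hP hχ, integral_mul_measureReal_Iic_comp h₂ hP hχ,
    ← integral_sub (integrable_integral_Ici_cdfInv h₁ hP hχ)
      (integrable_integral_Ici_cdfInv h₂ hP hχ)]
  simp only [intervalIntegral_cdfInv_eq_sub hχ]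

end QuantileIntegrals

lemma isTestFun_mul {G χ : ℝ → ℝ} (hG : ContDiff ℝ 1 G) (hGc : HasCompactSupport G)
    (hχ : Continuous χ) (hχc : HasCompactSupport χ) :
    IsTestFun (fun t x => G t * χ x) fun t x => deriv G t * χ x := by
  refine ⟨(hG.continuous.comp continuous_fst).mul (hχ.comp continuous_snd),
    .intro (hGc.isCompact.prod hχc.isCompact) fun z hz => ?_,
    ((hG.continuous_deriv le_rfl).comp continuous_fst).mul (hχ.comp continuous_snd),
    fun t x => (hG.differentiable one_ne_zero t).hasDerivAt.mul_const _⟩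
  obtain h | h := not_and_or.1 hz
  · exact mul_eq_zero_of_left (image_eq_zero_of_notMem_tsupport h) _
  · exact mul_eq_zero_of_right _ (image_eq_zero_of_notMem_tsupport h)

/-- The weak formulation, from time `0` on, of `∂ₜ β(F) + L ∂ₓ β(F) = 0`, where `β` is the
distribution function of a law `P` on `(0, 1)`. The measure with distribution function
`β (F t ·)` is encoded as the image of `P` under the quantile function `cdfInv (F t)`. -/
def IsWeakTransport (F L : ℝ → ℝ → ℝ) (P : Measure ℝ) : Prop :=
  ∀ φ φt : ℝ → ℝ → ℝ, IsTestFun φ φt →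
    (∫ t in Ici (0 : ℝ), ∫ x, φt t x * P.real (Iic (F t x)))
        + ∫ x, φ 0 x * P.real (Iic (F 0 x))
      = ∫ t in Ici (0 : ℝ), ∫ v, φ t (cdfInv (F t) v) * L t (cdfInv (F t) v) ∂P

section Characteristics

variable {F L : ℝ → ℝ → ℝ} {M : NNReal}

theorem IsWeakTransport.integral_intervalIntegral_cdfInv {P : Measure ℝ} [IsFiniteMeasure P]
    {K : NNReal} {χ : ℝ → ℝ} (hw : IsWeakTransport F L P)
    (hF : Measurable fun z : ℝ × ℝ => F z.1 z.2) (hcdf : ∀ t, IsCDF (F t))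
    (hL1 : ∀ a b t₀, Tendsto (fun t => ∫ x in Icc a b, |F t x - F t₀ x|) (nhds t₀) (nhds 0))
    (hL : Measurable fun z : ℝ × ℝ => L z.1 z.2) (hLM : ∀ t x, ‖L t x‖ ≤ M)
    (hP : ∀ᵐ v ∂P, v ∈ Ioo (0 : ℝ) 1)
    (hPK : LipschitzOnWith K (fun y => P.real (Iic y)) (Icc 0 1))
    (hχ : Continuous χ) (hχc : HasCompactSupport χ) {T : ℝ} (hT : 0 ≤ T) :
    ∫ v, (∫ x in cdfInv (F 0) v..cdfInv (F T) v, χ x) ∂P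
      = ∫ v, (∫ t in (0 : ℝ)..T, χ (cdfInv (F t) v) * L t (cdfInv (F t) v)) ∂P := by
  obtain ⟨C, hχC⟩ := hχc.exists_bound_of_continuous hχ
  have hχL : Measurable fun z : ℝ × ℝ => χ z.2 * L z.1 z.2 :=
    (hχ.measurable.comp measurable_snd).mul hL
  have hχLC : ∀ t x, ‖χ x * L t x‖ ≤ C * M := fun t x => norm_mul_le_of_le (hχC x) (hLM t x)
  have hweak : ∀ G : ℝ → ℝ, ContDiff ℝ 1 G → HasCompactSupport G →
      (∫ t in Ioi 0, deriv G t * ∫ x, χ x * P.real (Iic (F t x)))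
          + G 0 * ∫ x, χ x * P.real (Iic (F 0 x))
        = ∫ t in Ioi 0, G t * ∫ v, χ (cdfInv (F t) v) * L t (cdfInv (F t) v) ∂P := by
    intro G hG hGc
    simpa only [mul_assoc, integral_const_mul, integral_Ici_eq_integral_Ioi]
      using hw _ _ (isTestFun_mul hG hGc hχ hχc)
  have hdiff := sub_eq_neg_intervalIntegral_of_forall_integral_deriv_mul
    (continuous_integral_mul_measureReal_Iic hcdf hL1 hPK hχ hχc)
    (locallyIntegrable_integral_comp_cdfInv hF hcdf hχL hχLC hP) hweak hT
  rw [← intervalIntegral_integral_comp_cdfInv_swap hF hcdf hχL hχLC hP hT,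
    ← integral_mul_measureReal_Iic_comp_sub (hcdf 0) (hcdf T) hP
      (hχ.integrable_of_hasCompactSupport hχc)]
  linarith

lemma tendsto_intervalIntegral_mul_of_tendsto_one {w : ℕ → ℝ → ℝ} {f : ℝ → ℝ} {a b : ℝ}
    (hw : ∀ n, Measurable (w n)) (hw_le : ∀ n t, ‖w n t‖ ≤ 1)
    (hw_tendsto : ∀ t, Tendsto (w · t) atTop (nhds 1)) (hf : IntervalIntegrable f volume a b) :
    Tendsto (fun n => ∫ t in a..b, w n t * f t) atTop (nhds (∫ t in a..b, f t)) := by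
  refine intervalIntegral.tendsto_integral_filter_of_dominated_convergence (fun t => ‖f t‖)
    (.of_forall fun n => (hw n).aestronglyMeasurable.mul
      (intervalIntegrable_iff.1 hf).aestronglyMeasurable)
    (.of_forall fun n => .of_forall fun t _ => ?_) hf.norm (.of_forall fun t _ => ?_)
  · rw [norm_mul]
    exact mul_le_of_le_one_left (norm_nonneg _) (hw_le n t)
  · simpa only [one_mul] using (hw_tendsto t).mul_const (f t)

/-- A curve `F` of distribution functions, continuous in `L¹_loc`, transported with a velocity `L`
bounded by `M`, in such a way that the transport equation may be renormalised by every
distribution function with a unit density. -/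
structure IsRenormalisedTransport (F L : ℝ → ℝ → ℝ) (M : NNReal) : Prop where
  measurable_cdf : Measurable fun z : ℝ × ℝ => F z.1 z.2
  isCDF : ∀ t, IsCDF (F t)
  tendsto_L1 : ∀ a b t₀, Tendsto (fun t => ∫ x in Icc a b, |F t x - F t₀ x|) (nhds t₀) (nhds 0)
  measurable_velocity : Measurable fun z : ℝ × ℝ => L z.1 z.2
  norm_velocity_le : ∀ t x, ‖L t x‖ ≤ M
  weak : ∀ p, IsUnitDensity p → IsWeakTransport F L (unitLaw p)

namespace IsRenormalisedTransport

lemma ae_intervalIntegral_cdfInv_eq (h : IsRenormalisedTransport F L M) {χ : ℝ → ℝ}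
    (hχ : Continuous χ) (hχc : HasCompactSupport χ) {T : ℝ} (hT : 0 ≤ T) :
    ∀ᵐ v ∂volume.restrict (Ioo (0 : ℝ) 1), ∫ x in cdfInv (F 0) v..cdfInv (F T) v, χ x
      = ∫ t in (0 : ℝ)..T, χ (cdfInv (F t) v) * L t (cdfInv (F t) v) := by
  obtain ⟨hF, hcdf, hL1, hL, hLM, hweak⟩ := h
  obtain ⟨C, hχC⟩ := hχc.exists_bound_of_continuous hχ
  have hχL : Measurable fun z : ℝ × ℝ => χ z.2 * L z.1 z.2 :=
    (hχ.measurable.comp measurable_snd).mul hL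
  let A : ℝ → ℝ := fun v => ∫ x in cdfInv (F 0) v..cdfInv (F T) v, χ x
  let B : ℝ → ℝ := fun v => ∫ t in (0 : ℝ)..T, χ (cdfInv (F t) v) * L t (cdfInv (F t) v)
  have hint : ∀ P : Measure ℝ, IsFiniteMeasure P → (∀ᵐ v ∂P, v ∈ Ioo (0 : ℝ) 1) →
      Integrable A P ∧ Integrable B P := fun P _ hP =>
    ⟨integrable_intervalIntegral_cdfInv (hcdf 0) (hcdf T) hP
        (hχ.integrable_of_hasCompactSupport hχc : Integrable χ),
      integrable_intervalIntegral_comp_cdfInv hF hcdf hχL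
        (fun t x => norm_mul_le_of_le (hχC x) (hLM t x)) hP hT⟩
  obtain ⟨hA, hB⟩ := hint (volume.restrict (Ioo 0 1)) inferInstance
    (ae_restrict_mem measurableSet_Ioo)
  have hzero := ae_eq_zero_of_forall_integral_unitLaw_eq_zero (hA.sub hB) fun p hp => by
    obtain ⟨K, hK⟩ := hp.lipschitzOnWith_real_unitLaw_Iic
    have := hp.isProbabilityMeasure_unitLaw
    obtain ⟨hA, hB⟩ := hint (unitLaw p) inferInstance (ae_unitLaw_mem_Ioo p)
    rw [integral_sub' hA hB, sub_eq_zero]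
    exact (hweak p hp).integral_intervalIntegral_cdfInv hF hcdf hL1 hL hLM (ae_unitLaw_mem_Ioo p)
      hK hχ hχc hT
  filter_upwards [hzero] with v hv using sub_eq_zero.1 hv

lemma measurable_quantile (h : IsRenormalisedTransport F L M) {v : ℝ} (hv : v ∈ Ioo (0 : ℝ) 1) :
    Measurable fun t => cdfInv (F t) v :=
  measurable_cdfInv_left h.measurable_cdf h.isCDF hv

lemma intervalIntegrable_velocity (h : IsRenormalisedTransport F L M) {v : ℝ}
    (hv : v ∈ Ioo (0 : ℝ) 1) (a b : ℝ) :
    IntervalIntegrable (fun t => L t (cdfInv (F t) v)) volume a b :=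
  (intervalIntegrable_const (c := (M : ℝ))).mono_fun
    (h.measurable_velocity.comp
      (measurable_id.prodMk (h.measurable_quantile hv))).aestronglyMeasurable
    (.of_forall fun _ => (h.norm_velocity_le _ _).trans (le_abs_self (M : ℝ)))

/-- Cut-offs increasing to `1` replace the test function in space, by dominated convergence. -/
lemma ae_cdfInv_sub_zero_eq (h : IsRenormalisedTransport F L M) {T : ℝ} (hT : 0 ≤ T) :
    ∀ᵐ v ∂volume.restrict (Ioo (0 : ℝ) 1),
      cdfInv (F T) v - cdfInv (F 0) v = ∫ t in (0 : ℝ)..T, L t (cdfInv (F t) v) := by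
  let χ : (n : ℕ) → ContDiffBump (0 : ℝ) := fun n => ⟨n + 1, n + 2, by positivity, by linarith⟩
  have hχ_le : ∀ n x, ‖χ n x‖ ≤ 1 := fun n x => by
    rw [Real.norm_of_nonneg (χ n).nonneg]
    exact (χ n).le_one
  have hχ_tendsto : ∀ x, Tendsto (fun n => χ n x) atTop (nhds 1) := fun x => by
    refine tendsto_const_nhds.congr' ?_
    filter_upwards [eventually_ge_atTop ⌈|x|⌉₊] with n hn
    refine ((χ n).one_of_mem_closedBall ?_).symm
    rw [mem_closedBall_zero_iff, Real.norm_eq_abs]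
    exact (Nat.ceil_le.1 hn).trans (by simp [χ])
  filter_upwards [ae_all_iff.2 fun n => h.ae_intervalIntegral_cdfInv_eq (χ n).continuous
    (χ n).hasCompactSupport hT, ae_restrict_mem measurableSet_Ioo] with v hv hv01
  have hleft : Tendsto (fun n => ∫ x in cdfInv (F 0) v..cdfInv (F T) v, χ n x) atTop
      (nhds (cdfInv (F T) v - cdfInv (F 0) v)) := by
    simpa only [mul_one, intervalIntegral.integral_const, smul_eq_mul] using
      tendsto_intervalIntegral_mul_of_tendsto_one (fun n => (χ n).continuous.measurable) hχ_le
        hχ_tendsto (intervalIntegrable_const (c := (1 : ℝ)))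
  have hright : Tendsto (fun n => ∫ t in (0 : ℝ)..T, χ n (cdfInv (F t) v) * L t (cdfInv (F t) v))
      atTop (nhds (∫ t in (0 : ℝ)..T, L t (cdfInv (F t) v))) :=
    tendsto_intervalIntegral_mul_of_tendsto_one
      (fun n => (χ n).continuous.measurable.comp (h.measurable_quantile hv01))
      (fun n _ => hχ_le n _) (fun _ => hχ_tendsto _) (h.intervalIntegrable_velocity hv01 0 T)
  exact tendsto_nhds_unique hleft (hright.congr fun n => (hv n).symm)

lemma ae_cdfInv_sub_eq (h : IsRenormalisedTransport F L M) {t₁ t₂ : ℝ} (h₁ : 0 ≤ t₁)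
    (h₂ : 0 ≤ t₂) : ∀ᵐ v ∂volume.restrict (Ioo (0 : ℝ) 1),
      cdfInv (F t₂) v - cdfInv (F t₁) v = ∫ t in t₁..t₂, L t (cdfInv (F t) v) := by
  filter_upwards [h.ae_cdfInv_sub_zero_eq h₁, h.ae_cdfInv_sub_zero_eq h₂,
    ae_restrict_mem measurableSet_Ioo] with v hv₁ hv₂ hv
  have hL := h.intervalIntegrable_velocity hv
  rw [← intervalIntegral.integral_interval_sub_left (hL 0 t₂) (hL 0 t₁), ← hv₁, ← hv₂,
    sub_sub_sub_cancel_right]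

/-- The bound holds for almost every quantile by the integral identity, hence for every quantile
because `cdfInv` is left-continuous. -/
theorem lipschitzOnWith_cdfInv (h : IsRenormalisedTransport F L M) {v : ℝ}
    (hv : v ∈ Ioo (0 : ℝ) 1) : LipschitzOnWith M (fun t => cdfInv (F t) v) (Ici 0) := by
  refine .of_le_add_mul M fun t₂ h₂ t₁ h₁ => ?_
  refine (h.isCDF t₂).cdfInv_le_cdfInv_add_of_ae (h.isCDF t₁) ?_ hv
  filter_upwards [h.ae_cdfInv_sub_eq h₁ h₂] with w hw
  rw [← sub_le_iff_le_add', hw]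
  exact (Real.le_norm_self _).trans
    (intervalIntegral.norm_integral_le_of_norm_le_const fun t _ => h.norm_velocity_le t _)

theorem ae_forall_cdfInv_sub_eq (h : IsRenormalisedTransport F L M) :
    ∀ᵐ v ∂volume.restrict (Ioo (0 : ℝ) 1), ∀ t₁ t₂, 0 ≤ t₁ → 0 ≤ t₂ →
      cdfInv (F t₂) v - cdfInv (F t₁) v = ∫ t in t₁..t₂, L t (cdfInv (F t) v) := by
  filter_upwards [ae_all_iff.2 fun q : ℚ => h.ae_cdfInv_sub_zero_eq (le_max_right (q : ℝ) 0),
    ae_restrict_mem measurableSet_Ioo] with v hrat hv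
  have hL := h.intervalIntegrable_velocity hv
  have hmax : Continuous fun t : ℝ => max t 0 := by fun_prop
  have hcurve : Continuous fun t => cdfInv (F (max t 0)) v :=
    (h.lipschitzOnWith_cdfInv hv).continuousOn.comp_continuous hmax fun t => le_max_right t 0
  have hall := Rat.denseRange_cast.equalizer (hcurve.sub continuous_const)
    ((intervalIntegral.continuous_primitive hL 0).comp hmax) (funext hrat)
  have hzero : ∀ t, 0 ≤ t →
      cdfInv (F t) v - cdfInv (F 0) v = ∫ s in (0 : ℝ)..t, L s (cdfInv (F s) v) := fun t ht => by
    simpa only [Pi.sub_apply, Function.comp_apply, max_eq_left ht] using congrFun hall t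
  intro t₁ t₂ h₁ h₂
  rw [← intervalIntegral.integral_interval_sub_left (hL 0 t₂) (hL 0 t₁), ← hzero t₁ h₁,
    ← hzero t₂ h₂, sub_sub_sub_cancel_right]

end IsRenormalisedTransport

end Characteristics

lemma IsCDF.leftLim_mem_Icc {F : ℝ → ℝ} (h : IsCDF F) (x : ℝ) :
    Function.leftLim F x ∈ Icc (0 : ℝ) 1 :=
  ⟨(h.nonneg (x - 1)).trans (h.1.le_leftLim (sub_one_lt x)),
    (h.1.leftLim_le le_rfl).trans (h.le_one x)⟩

lemma measurable_leftLim_of_monotone {α : Type*} [MeasurableSpace α] {f : α → ℝ → ℝ}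
    (hf : Measurable fun z : α × ℝ => f z.1 z.2) (hmono : ∀ a, Monotone (f a)) :
    Measurable fun z : α × ℝ => Function.leftLim (f z.1) z.2 := by
  obtain ⟨ε, -, hε_pos, hε_lim⟩ := exists_seq_strictAnti_tendsto (0 : ℝ)
  refine measurable_of_tendsto_metrizable (f := fun n (z : α × ℝ) => f z.1 (z.2 - ε n))
    (fun n => hf.comp (measurable_fst.prodMk (measurable_snd.sub_const _)))
    (tendsto_pi_nhds.2 fun z => ((hmono z.1).tendsto_leftLim z.2).comp ?_)
  refine tendsto_nhdsWithin_iff.2 ⟨?_, .of_forall fun n => sub_lt_self _ (hε_pos n)⟩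
  simpa only [sub_zero] using hε_lim.const_sub z.2

section Velocity

variable {d : ℕ} {u : Fin d → ℝ → ℝ → ℝ} {lam : Fin d → (Fin d → ℝ) → ℝ} {γ : Fin d} {C : ℝ}

/-- The state at which `lam γ` is evaluated in `lamBrace`: the `γ`-th coordinate of `u t x` is
replaced by the point with parameter `θ` of the segment from its left limit to its value. -/
def interpState (u : Fin d → ℝ → ℝ → ℝ) (γ : Fin d) (t x θ : ℝ) : Fin d → ℝ :=
  Function.update (fun γ' => u γ' t x) γ ((1 - θ) * Function.leftLim (u γ t) x + θ * u γ t x)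

lemma lamBrace_eq_integral_interpState (lam : Fin d → (Fin d → ℝ) → ℝ)
    (u : Fin d → ℝ → ℝ → ℝ) (γ : Fin d) (t x : ℝ) :
    lamBrace lam u γ t x = ∫ θ in (0 : ℝ)..1, lam γ (interpState u γ t x θ) :=
  rfl

lemma interpState_mem_Icc {t x θ : ℝ} (hcdf : ∀ i, IsCDF (u i t)) (hθ : θ ∈ Icc (0 : ℝ) 1) :
    interpState u γ t x θ ∈ Icc (0 : Fin d → ℝ) 1 := by
  have hγ : (1 - θ) * Function.leftLim (u γ t) x + θ * u γ t x ∈ Icc (0 : ℝ) 1 :=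
    convex_Icc 0 1 ((hcdf γ).leftLim_mem_Icc x) ((hcdf γ).mem_Icc x) (sub_nonneg.2 hθ.2) hθ.1
      (sub_add_cancel 1 θ)
  exact ⟨le_update_iff.2 ⟨hγ.1, fun i _ => (hcdf i).nonneg x⟩,
    update_le_iff.2 ⟨hγ.2, fun i _ => (hcdf i).le_one x⟩⟩

lemma measurable_interpState (hu : ∀ i, Measurable fun z : ℝ × ℝ => u i z.1 z.2)
    (hmono : ∀ t, Monotone (u γ t)) :
    Measurable fun q : (ℝ × ℝ) × ℝ => interpState u γ q.1.1 q.1.2 q.2 := by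
  have hleft := measurable_leftLim_of_monotone (hu γ) hmono
  exact measurable_update'.comp <|
    (measurable_pi_lambda _ fun i => (hu i).comp measurable_fst).prodMk
      (((measurable_const.sub measurable_snd).mul (hleft.comp measurable_fst)).add
        (measurable_snd.mul ((hu γ).comp measurable_fst)))

lemma norm_lamBrace_le (hcdf : ∀ i t, IsCDF (u i t))
    (hC : ∀ y ∈ Icc (0 : Fin d → ℝ) 1, ‖lam γ y‖ ≤ C) (t x : ℝ) : ‖lamBrace lam u γ t x‖ ≤ C := by
  rw [lamBrace_eq_integral_interpState]
  refine (intervalIntegral.norm_integral_le_of_norm_le_const fun θ hθ =>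
    hC _ (interpState_mem_Icc (fun i => hcdf i t) ?_)).trans_eq (by simp)
  exact Ioc_subset_Icc_self (uIoc_of_le (zero_le_one (α := ℝ)) ▸ hθ)

/-- `lam γ` need not be measurable outside the unit cube, so it is cut off there first. -/
lemma measurable_lamBrace (hlam : ContinuousOn (lam γ) (Icc 0 1))
    (hu : ∀ i, Measurable fun z : ℝ × ℝ => u i z.1 z.2) (hcdf : ∀ i t, IsCDF (u i t)) :
    Measurable fun z : ℝ × ℝ => lamBrace lam u γ z.1 z.2 := by
  have hcut : Measurable ((Icc (0 : Fin d → ℝ) 1).indicator (lam γ)) := by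
    classical
    rw [← piecewise_eq_indicator]
    exact hlam.measurable_piecewise continuousOn_const measurableSet_Icc
  have heq : ∀ z : ℝ × ℝ, lamBrace lam u γ z.1 z.2
      = ∫ θ in Ioc (0 : ℝ) 1, (Icc 0 1).indicator (lam γ) (interpState u γ z.1 z.2 θ) := fun z => by
    rw [lamBrace_eq_integral_interpState, intervalIntegral.integral_of_le zero_le_one]
    refine setIntegral_congr_fun measurableSet_Ioc fun θ hθ => (indicator_of_mem ?_ _).symm
    exact interpState_mem_Icc (fun i => hcdf i z.1) (Ioc_subset_Icc_self hθ)
  simp only [heq]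
  exact (hcut.comp (measurable_interpState hu fun t => (hcdf γ t).1)
    ).stronglyMeasurable.integral_prod_right'.measurable

end Velocity

section RenormalisedSolution

variable {d : ℕ} {u : Fin d → ℝ → ℝ → ℝ} {lam : Fin d → (Fin d → ℝ) → ℝ} {γ : Fin d}

lemma measurable_comp_max_zero {f : ℝ → ℝ → ℝ}
    (hf : Measurable fun z : Ici (0 : ℝ) × ℝ => f z.1 z.2) :
    Measurable fun z : ℝ × ℝ => f (max z.1 0) z.2 :=
  have htime : Measurable fun z : ℝ × ℝ => (⟨max z.1 0, le_max_right z.1 0⟩ : Ici (0 : ℝ)) :=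
    (measurable_fst.max measurable_const).subtype_mk
  hf.comp (htime.prodMk measurable_snd)

lemma isWeakTransport_unitLaw {p : ℝ → ℝ}
    (hcdf : ∀ t, 0 ≤ t → IsCDF (u γ t)) (hren : IsRenormalised lam u (fun i => u i 0) γ)
    (hp : IsUnitDensity p) (hL : Measurable fun z : ℝ × ℝ => lamBrace lam u γ (max z.1 0) z.2) :
    IsWeakTransport (fun t => u γ (max t 0)) (fun t => lamBrace lam u γ (max t 0)) (unitLaw p) := by
  intro φ φt hφ
  obtain ⟨ν, hν, hνcdf, hweak⟩ := hren _ hp.contDiff_primitive.contDiffOn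
    (hp.strictMono_primitive.strictMonoOn _) intervalIntegral.integral_same hp.integral_eq_one
    φ φt hφ
  have := hp.isProbabilityMeasure_unitLaw
  have hβ : ∀ t, 0 ≤ t → ∀ x,
      (unitLaw p).real (Iic (u γ t x)) = ∫ v in (0 : ℝ)..u γ t x, p v := fun t ht x =>
    hp.real_unitLaw_Iic ((hcdf t ht).mem_Icc x)
  have hmap : ∀ t, 0 ≤ t → (unitLaw p).map (cdfInv (u γ t)) = ν t := fun t ht =>
    (hcdf t ht).map_cdfInv (ae_unitLaw_mem_Ioo p) fun x => (hνcdf t ht x).trans (hβ t ht x).symm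
  have hsource : ∀ t, 0 ≤ t → ∫ x, φ t x * lamBrace lam u γ t x ∂ν t
      = ∫ v, φ t (cdfInv (u γ t) v) * lamBrace lam u γ t (cdfInv (u γ t) v) ∂unitLaw p := by
    intro t ht
    have hφt : Measurable (φ t) := (hφ.1.comp (Continuous.prodMk_right t)).measurable
    have hLt : Measurable (lamBrace lam u γ t) := by
      simpa only [Function.comp_def, max_eq_left ht] using hL.comp (measurable_prodMk_left (x := t))
    rw [← hmap t ht]
    exact integral_map ((hcdf t ht).aemeasurable_cdfInv (ae_unitLaw_mem_Ioo p))
      (hφt.mul hLt).aestronglyMeasurable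
  have hleft : ∫ t in Ici (0 : ℝ), ∫ x, φt t x * (unitLaw p).real (Iic (u γ (max t 0) x))
      = ∫ t in Ici (0 : ℝ), ∫ x, φt t x * ∫ v in (0 : ℝ)..u γ t x, p v :=
    setIntegral_congr_fun measurableSet_Ici fun t (ht : 0 ≤ t) => by
      simp only [max_eq_left ht, hβ t ht]
  have hright : ∫ t in Ici (0 : ℝ), ∫ v, φ t (cdfInv (u γ (max t 0)) v)
        * lamBrace lam u γ (max t 0) (cdfInv (u γ (max t 0)) v) ∂unitLaw p
      = ∫ t in Ici (0 : ℝ), ∫ x, φ t x * lamBrace lam u γ t x ∂ν t :=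
    setIntegral_congr_fun measurableSet_Ici fun t (ht : 0 ≤ t) => by
      simp only [max_eq_left ht, hsource t ht]
  simpa only [hleft, hright, max_self, hβ 0 le_rfl] using hweak

/-- Extending the solution to negative times by its initial value keeps it `L¹_loc`-continuous on
the whole line, which removes the one-sided behaviour at time `0`. -/
theorem exists_isRenormalisedTransport (hlam : ContinuousOn (lam γ) (Icc 0 1))
    (hmeas : ∀ i, Measurable fun z : Ici (0 : ℝ) × ℝ => u i z.1 z.2)
    (hcdf : ∀ i t, 0 ≤ t → IsCDF (u i t))
    (hL1 : ∀ a b t₀, 0 ≤ t₀ → Tendsto (fun t => ∫ x in Icc a b, |u γ t x - u γ t₀ x|)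
      (nhdsWithin t₀ (Ici 0)) (nhds 0))
    (hren : IsRenormalised lam u (fun i => u i 0) γ) :
    ∃ M, IsRenormalisedTransport (fun t => u γ (max t 0))
      (fun t => lamBrace lam u γ (max t 0)) M := by
  obtain ⟨C, hC⟩ := isCompact_Icc.exists_bound_of_continuousOn hlam
  have hmeas_ext : ∀ i, Measurable fun z : ℝ × ℝ => u i (max z.1 0) z.2 := fun i =>
    measurable_comp_max_zero (hmeas i)
  have hcdf_ext : ∀ i t, IsCDF (u i (max t 0)) := fun i t => hcdf i _ (le_max_right t 0)
  have hL : Measurable fun z : ℝ × ℝ => lamBrace lam u γ (max z.1 0) z.2 :=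
    measurable_lamBrace (u := fun i t => u i (max t 0)) hlam hmeas_ext hcdf_ext
  refine ⟨C.toNNReal, hmeas_ext γ, hcdf_ext γ, fun a b t₀ => ?_, hL, fun t x => ?_, fun p hp =>
    isWeakTransport_unitLaw (hcdf γ) hren hp hL⟩
  · refine (hL1 a b _ (le_max_right t₀ 0)).comp
      (tendsto_nhdsWithin_iff.2 ⟨?_, .of_forall fun t => le_max_right t 0⟩)
    exact (continuous_id.max continuous_const).tendsto t₀
  · exact (norm_lamBrace_le (u := fun i t => u i (max t 0)) hcdf_ext hC t x).trans
      (Real.le_coe_toNNReal C)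

end RenormalisedSolution

theorem renormalised_implies_characteristics_general {d : ℕ} {lam : Fin d → (Fin d → ℝ) → ℝ}
    {u : Fin d → ℝ → ℝ → ℝ} {γ : Fin d} (hlam : ContinuousOn (lam γ) (Icc 0 1))
    (hmeas : ∀ i, Measurable fun z : Ici (0 : ℝ) × ℝ => u i z.1 z.2)
    (hcdf : ∀ i t, 0 ≤ t → IsCDF (u i t))
    (hL1 : ∀ a b t₀, 0 ≤ t₀ → Tendsto (fun t => ∫ x in Icc a b, |u γ t x - u γ t₀ x|)
      (nhdsWithin t₀ (Ici 0)) (nhds 0))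
    (hren : IsRenormalised lam u (fun i => u i 0) γ) :
    (∃ K : NNReal, ∀ v ∈ Ioo (0 : ℝ) 1, LipschitzOnWith K (fun t => cdfInv (u γ t) v) (Ici 0)) ∧
      ∀ᵐ v ∂volume.restrict (Ioo (0 : ℝ) 1), ∀ t₁ t₂, 0 ≤ t₁ → 0 ≤ t₂ →
        cdfInv (u γ t₂) v - cdfInv (u γ t₁) v
          = ∫ s in t₁..t₂, lamBrace lam u γ s (cdfInv (u γ s) v) := by
  obtain ⟨M, h⟩ := exists_isRenormalisedTransport hlam hmeas hcdf hL1 hren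
  refine ⟨⟨M, fun v hv s hs t ht => ?_⟩, ?_⟩
  · simpa only [max_eq_left (mem_Ici.1 hs), max_eq_left (mem_Ici.1 ht)] using
      h.lipschitzOnWith_cdfInv hv hs ht
  · filter_upwards [h.ae_forall_cdfInv_sub_eq] with v hv t₁ t₂ h₁ h₂
    have hcongr : EqOn (fun s => lamBrace lam u γ (max s 0) (cdfInv (u γ (max s 0)) v))
        (fun s => lamBrace lam u γ s (cdfInv (u γ s) v)) (uIcc t₁ t₂) := fun s hs => by
      simp only [max_eq_left ((le_min h₁ h₂).trans hs.1)]
    rw [← intervalIntegral.integral_congr hcongr, ← hv t₁ t₂ h₁ h₂, max_eq_left h₁, max_eq_left h₂]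

/-- **Renormalised solutions follow the characteristics**: if `u` is a renormalised
solution in the `γ`-th coordinate, then for a.e. `v ∈ (0,1)` the quantile trajectory
`t ↦ X_v^γ(t)` is Lipschitz on `[0,∞)` and satisfies
`X_v^γ(t₂) − X_v^γ(t₁) = ∫_{t₁}^{t₂} λ^γ{u}(s, X_v^γ(s)) ds`. -/
theorem renormalised_implies_characteristics {d : ℕ} (hd : 1 ≤ d)
    (lam : Fin d → (Fin d → ℝ) → ℝ)
    (hlam : ∀ γ : Fin d, ContinuousOn (lam γ) (Icc (0 : Fin d → ℝ) 1))
    (u : Fin d → ℝ → ℝ → ℝ) (u0 : Fin d → ℝ → ℝ)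
    (hsol : IsProbSol lam u u0)
    (hinit : ∀ (γ : Fin d) (x : ℝ), u γ 0 x = u0 γ x)
    (hL1 : ContL1loc u)
    (γ : Fin d) (hren : IsRenormalised lam u u0 γ) :
    ∀ᵐ v ∂(volume.restrict (Ioo (0:ℝ) 1)),
      (∃ K : NNReal, LipschitzOnWith K (fun t => cdfInv (u γ t) v) (Ici 0)) ∧
      ∀ t₁ t₂ : ℝ, 0 ≤ t₁ → t₁ ≤ t₂ →
        cdfInv (u γ t₂) v - cdfInv (u γ t₁) v
          = ∫ s in t₁..t₂, lamBrace lam u γ s (cdfInv (u γ s) v) := by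
  obtain rfl : (fun i => u i 0) = u0 := by
    ext i x
    exact hinit i x
  obtain ⟨⟨K, hK⟩, hchar⟩ := renormalised_implies_characteristics_general (hlam γ) hsol.1 hsol.2.1
    (hL1 γ) hren
  filter_upwards [hchar, ae_restrict_mem measurableSet_Ioo] with v hv hv01
  exact ⟨⟨K, hK v hv01⟩, fun t₁ t₂ h₁ h₁₂ => hv t₁ t₂ h₁ (h₁.trans h₁₂)⟩
end
end
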